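/- Let 2 ≤ p < ∞, 0 < q ≤ ∞, and s ≥ 0. There exists C > 0, depending only on φ, Φ, p, q, s, such that for every admissible finite collection 𝓘 = {[a_m,b_m]}_{m=1}^N and every Schwartz function f, one has ( Σ_{j∈ℤ} ( 2^{js} ‖ ( Σ_{m=1}^N |((f∗φ_m)∗ψ_j)(x)|² )^{1/2} ‖_{L^p(dx)} )^q )^{1/q} ≤ C ( Σ_{j∈ℤ} ( 2^{js} ‖ f∗ψ_j ‖_{L^p} )^q )^{1/q} (suprema over j when q = ∞). This is the uniform boundedness of the family WITHOUT rotations on the homogeneous Besov space Ḃ^s_{pq}. -/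

import Mathlib

open MeasureTheory Real Set Function
open scoped FourierTransform ENNReal NNReal

/-- `e2pi t = e^{2πit}`. -/
noncomputable def e2pi (t : ℝ) : ℂ := Complex.exp (2 * (Real.pi : ℂ) * Complex.I * (t : ℂ))

/-- Convolution of two functions on `ℝ`. -/
noncomputable def conv (f g : ℝ → ℂ) (x : ℝ) : ℂ := ∫ t, f t * g (x - t)

/-- The function `φ_m` associated with the interval `[a,b]`: its Fourier transform is
`ξ ↦ 𝓕φ ((ξ - a)/(b - a))`; in space variables it is `x ↦ (b-a) e^{2πiax} φ((b-a)x)`. -/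
noncomputable def phim (φ : ℝ → ℂ) (a b : ℝ) (x : ℝ) : ℂ :=
  ((b - a : ℝ) : ℂ) * e2pi (a * x) * φ ((b - a) * x)

/-- A finite collection of compact intervals `[a m, b m]` is admissible if the intervals are
nondegenerate, pairwise disjoint, and none of them contains `0` in its interior. -/
def Admissible {N : ℕ} (a b : Fin N → ℝ) : Prop :=
  (∀ m, a m < b m) ∧ (∀ m, (0 : ℝ) ∉ Set.Ioo (a m) (b m)) ∧
    ∀ m m', m ≠ m' → Disjoint (Set.Icc (a m) (b m)) (Set.Icc (a m') (b m'))

/-- The rotated Rubio de Francia piece `g_m(x) = e^{-2πi a x} (f ∗ φ_m)(x)`. -/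
noncomputable def rotConv (φ : ℝ → ℂ) (a b : ℝ) (f : ℝ → ℂ) (x : ℝ) : ℂ :=
  e2pi (-(a * x)) * conv f (phim φ a b) x

/-- Littlewood–Paley block `ψ_j`, whose Fourier transform is `ξ ↦ 𝓕Φ(2^{-j}ξ) - 𝓕Φ(2^{-j+1}ξ)`. -/
noncomputable def psi (Φ : ℝ → ℂ) (j : ℤ) (x : ℝ) : ℂ :=
  (((2:ℝ) ^ j : ℝ) : ℂ) * Φ ((2:ℝ) ^ j * x) - (((2:ℝ) ^ (j-1) : ℝ) : ℂ) * Φ ((2:ℝ) ^ (j-1) * x)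

/-- The `ℓ^q` (quasi)norm of a sequence indexed by `ℤ`, with values in `[0,∞]`;
for `q = ∞` it is the supremum. -/
noncomputable def lqNorm (q : ℝ≥0∞) (F : ℤ → ℝ≥0∞) : ℝ≥0∞ :=
  if q = ∞ then ⨆ j, F j else (∑' j, F j ^ q.toReal) ^ (1 / q.toReal)

/-!
The square function is dualized into an operator sending vector-valued functions to scalar ones,
`T g (y) = ∑ m, ∫ x, k_m x y * g_m x`, where the wave packet `k_m x` has spectrum in
`-[a_m, b_m]`. The spectra for different `m` are disjoint, so the summands are orthogonal and `T`
is bounded on `L²`, uniformly in the number of intervals.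

Hörmander's condition for the kernel also comes from orthogonality. Multiplication by `y - x'`
does not enlarge the spectra of `k_m x` and `k_m x'`. So for `|x - x'| ≤ r`, Cauchy–Schwarz
against the weight `(y - x')⁻²` bounds `∫ ‖∑ m, (k_m x y - k_m x' y) v_m‖ dy` over the set
`|y - x'| ≥ 2r` by weighted `L²` norms of single wave packets and their differences. These are
controlled by decay when `b_m - a_m > 1 / r` and by regularity otherwise. In the second case `k_m x`
and `k_m x'` can be compared because their modulation `e^{-2πi a_m y}` does not depend on `x`: this
is what the rotations in `rotConv` achieve.

Calderón–Zygmund theory then bounds `T` from `L^r(ℓ²)` to `L^r` for `1 < r ≤ 2`, and duality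
bounds the square function on `L^p` for `p ≥ 2`. The rotations have modulus one, so they do not
affect the square function. Finally, convolution with `ψ_j` commutes with convolution with `φ_m`,
and the Besov estimate is the `L^p` estimate applied to `f ∗ ψ_j` for each `j`.
-/

/-! ### Orthogonality of functions with disjoint spectra -/

lemma e2pi_add (s t : ℝ) : e2pi (s + t) = e2pi s * e2pi t := by
  simp only [e2pi, ← Complex.exp_add]
  push_cast
  ring_nf

lemma norm_e2pi (t : ℝ) : ‖e2pi t‖ = 1 := by
  have : e2pi t = Complex.exp ((2 * π * t : ℝ) * Complex.I) := by
    simp only [e2pi]; push_cast; ring_nf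
  rw [this, Complex.norm_exp_ofReal_mul_I]

@[fun_prop]
lemma continuous_e2pi : Continuous e2pi := by
  unfold e2pi; fun_prop

lemma lintegral_enorm_sq_eq_enorm_toLp_sq {α E : Type*} [MeasurableSpace α] {μ : Measure α}
    [NormedAddCommGroup E] {u : α → E} (hu : MemLp u 2 μ) :
    ∫⁻ y, ‖u y‖ₑ ^ 2 ∂μ = ‖hu.toLp u‖ₑ ^ 2 := by
  rw [Lp.enorm_toLp, eLpNorm_eq_lintegral_rpow_enorm_toReal two_ne_zero ENNReal.ofNat_ne_top,
    ← ENNReal.rpow_natCast, ← ENNReal.rpow_mul]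
  norm_num

lemma norm_sq_sum_of_pairwise_inner_eq_zero {𝕜 E ι : Type*} [RCLike 𝕜] [NormedAddCommGroup E]
    [InnerProductSpace 𝕜 E] {v : ι → E} (hv : Pairwise fun m n => inner 𝕜 (v m) (v n) = 0)
    (s : Finset ι) : ‖∑ m ∈ s, v m‖ ^ 2 = ∑ m ∈ s, ‖v m‖ ^ 2 := by
  simp_rw [← inner_self_eq_norm_sq (𝕜 := 𝕜), sum_inner, inner_sum, map_sum]
  refine Finset.sum_congr rfl fun m hm => ?_
  exact Finset.sum_eq_single_of_mem m hm fun n _ hn => by rw [hv hn.symm, map_zero]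

lemma toLp_finset_sum {α E ι : Type*} [MeasurableSpace α] {μ : Measure α} {p : ℝ≥0∞}
    [NormedAddCommGroup E] {u : ι → α → E} (hu : ∀ m, MemLp (u m) p μ) {s : Finset ι}
    (hsum : MemLp (fun y => ∑ m ∈ s, u m y) p μ) :
    hsum.toLp _ = ∑ m ∈ s, (hu m).toLp (u m) := by
  refine Lp.ext ?_
  filter_upwards [hsum.coeFn_toLp, Lp.coeFn_fun_finsetSum s fun m => (hu m).toLp (u m),
    (Filter.eventually_all_finset s).2 fun m _ => (hu m).coeFn_toLp] with y h h' hm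
  rw [h, h']
  exact Finset.sum_congr rfl fun m hms => (hm m hms).symm

lemma inner_toLp_eq_integral {α 𝕜 E : Type*} [MeasurableSpace α] {μ : Measure α}
    [RCLike 𝕜] [NormedAddCommGroup E] [InnerProductSpace 𝕜 E] {u v : α → E}
    (hu : MemLp u 2 μ) (hv : MemLp v 2 μ) :
    inner 𝕜 (hu.toLp u) (hv.toLp v) = ∫ y, inner 𝕜 (u y) (v y) ∂μ := by
  rw [L2.inner_def]
  refine integral_congr_ae ?_
  filter_upwards [hu.coeFn_toLp, hv.coeFn_toLp] with y hy hy'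
  rw [hy, hy']

lemma lintegral_enorm_sq_sum_of_orthogonal {α 𝕜 E ι : Type*} [MeasurableSpace α] {μ : Measure α}
    [RCLike 𝕜] [NormedAddCommGroup E] [InnerProductSpace 𝕜 E] {u : ι → α → E}
    (hu : ∀ m, MemLp (u m) 2 μ)
    (horth : Pairwise fun m n => ∫ y, inner 𝕜 (u m y) (u n y) ∂μ = 0) (s : Finset ι) :
    ∫⁻ y, ‖∑ m ∈ s, u m y‖ₑ ^ 2 ∂μ = ∑ m ∈ s, ∫⁻ y, ‖u m y‖ₑ ^ 2 ∂μ := by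
  have pythagoras := norm_sq_sum_of_pairwise_inner_eq_zero (𝕜 := 𝕜)
    (v := fun m => (hu m).toLp (u m)) (fun m n hmn =>
      (inner_toLp_eq_integral (hu m) (hu n)).trans (horth hmn)) s
  have hsum : MemLp (fun y => ∑ m ∈ s, u m y) 2 μ := memLp_finsetSum s fun m _ => hu m
  simp_rw [lintegral_enorm_sq_eq_enorm_toLp_sq (hu _)]
  rw [lintegral_enorm_sq_eq_enorm_toLp_sq hsum, toLp_finset_sum hu]
  simp_rw [← ofReal_norm, ← ENNReal.ofReal_pow (norm_nonneg _)]
  rw [pythagoras, ENNReal.ofReal_sum_of_nonneg fun m _ => by positivity]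

lemma fourier_eq_integral_e2pi_mul (f : ℝ → ℂ) (ξ : ℝ) :
    𝓕 f ξ = ∫ y, e2pi (-(y * ξ)) * f y := by
  rw [Real.fourier_eq']
  congr with y
  simp only [e2pi, smul_eq_mul, RCLike.inner_apply, conj_trivial]
  push_cast
  ring_nf

section HasSpectrumIn

variable {V H : Type*} [NormedAddCommGroup V] [InnerProductSpace ℝ V] [FiniteDimensional ℝ V]
  [MeasurableSpace V] [BorelSpace V] [NormedAddCommGroup H] [InnerProductSpace ℂ H]

lemma integral_inner_fourier_eq [CompleteSpace H] {u v : V → H} (hu : Integrable u)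
    (hv : Continuous v) (hv' : Integrable v) (hv'' : Integrable (𝓕 v)) :
    ∫ ξ, inner ℂ (𝓕 u ξ) (𝓕 v ξ) = ∫ y, inner ℂ (u y) (v y) := by
  have key := VectorFourier.integral_sesq_fourierIntegral_eq_neg_flip (L := innerₗ V)
    (μ := volume) (ν := volume) (innerSL ℂ) Real.continuous_fourierChar continuous_inner hu hv''
  have inversion : ∀ y, VectorFourier.fourierIntegral 𝐞 volume (-(innerₗ V).flip) (𝓕 v) y = v y :=
    fun y => by
      rw [← congrFun (hv.fourierInv_fourier_eq hv' hv'') y]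
      simp only [flip_innerₗ]
      rfl
  simp_rw [inversion] at key
  exact key

/-- `u` is a continuous integrable function whose Fourier transform is integrable and lives on the
frequency set `I`. This is a class of functions closed under linear combinations, on which Fourier
inversion and Plancherel's identity hold. -/
structure HasSpectrumIn (I : Set V) (u : V → H) : Prop where
  continuous : Continuous u
  integrable : Integrable u
  integrable_fourier : Integrable (𝓕 u)
  support_fourier_subset : support (𝓕 u) ⊆ I

namespace HasSpectrumIn

variable {I J : Set V} {u v : V → H}

lemma add (hu : HasSpectrumIn I u) (hv : HasSpectrumIn I v) : HasSpectrumIn I (u + v) := by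
  have h : 𝓕 (u + v) = 𝓕 u + 𝓕 v :=
    VectorFourier.fourierIntegral_add Real.continuous_fourierChar continuous_inner hu.integrable
      hv.integrable
  refine ⟨hu.continuous.add hv.continuous, hu.integrable.add hv.integrable, ?_, ?_⟩ <;> rw [h]
  · exact hu.integrable_fourier.add hv.integrable_fourier
  · exact (support_add _ _).trans
      (union_subset hu.support_fourier_subset hv.support_fourier_subset)

lemma const_smul (hu : HasSpectrumIn I u) (c : ℂ) : HasSpectrumIn I (c • u) := by
  have h : 𝓕 (c • u) = c • 𝓕 u := VectorFourier.fourierIntegral_const_smul _ _ _ _ _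
  refine ⟨hu.continuous.const_smul c, hu.integrable.smul c, ?_, ?_⟩ <;> rw [h]
  · exact hu.integrable_fourier.smul c
  · exact (support_const_smul_subset c _).trans hu.support_fourier_subset

variable [CompleteSpace H]

lemma exists_norm_le (hu : HasSpectrumIn I u) : ∃ M, ∀ y, ‖u y‖ ≤ M := by
  refine ⟨∫ ξ, ‖𝓕 u ξ‖, fun y => ?_⟩
  rw [← congrFun (hu.continuous.fourierInv_fourier_eq hu.integrable hu.integrable_fourier) y]
  exact VectorFourier.norm_fourierIntegral_le_integral_norm _ _ _ _ _

lemma memLp_two (hu : HasSpectrumIn I u) : MemLp u 2 := by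
  obtain ⟨M, hM⟩ := hu.exists_norm_le
  refine (memLp_two_iff_integrable_sq_norm hu.integrable.1).2 ?_
  simp_rw [sq]
  exact hu.integrable.norm.bdd_mul hu.continuous.norm.aestronglyMeasurable
    (.of_forall fun y => (norm_norm (u y)).trans_le (hM y))

lemma integral_inner_eq_zero (hu : HasSpectrumIn I u) (hv : HasSpectrumIn J v)
    (hIJ : Disjoint I J) : ∫ y, inner ℂ (u y) (v y) = 0 := by
  rw [← integral_inner_fourier_eq hu.integrable hv.continuous hv.integrable hv.integrable_fourier]
  refine integral_eq_zero_of_ae (Filter.Eventually.of_forall fun ξ => ?_)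
  by_cases hξ : 𝓕 u ξ = 0
  · simp [hξ]
  · have : 𝓕 v ξ = 0 := by
      by_contra hv'
      exact disjoint_left.1 hIJ (hu.support_fourier_subset hξ) (hv.support_fourier_subset hv')
    simp [this]

lemma lintegral_enorm_sq_sum {ι : Type*} {I : ι → Set V} {u : ι → V → H}
    (hu : ∀ m, HasSpectrumIn (I m) (u m)) (hI : Pairwise (Disjoint on I)) (s : Finset ι) :
    ∫⁻ y, ‖∑ m ∈ s, u m y‖ₑ ^ 2 = ∑ m ∈ s, ∫⁻ y, ‖u m y‖ₑ ^ 2 :=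
  lintegral_enorm_sq_sum_of_orthogonal (fun m => (hu m).memLp_two)
    (fun m n hmn => (hu m).integral_inner_eq_zero (hu n) (hI hmn)) s

end HasSpectrumIn

end HasSpectrumIn

/-! ### Wave packets -/

/-- The `L¹`-normalized wave packet with profile `η` attached to the interval `[a, b]` and to the
point `x`: convolving with `phim φ a b` amounts, up to a unimodular factor, to integrating against
`wavePacket φ a b x`. -/
noncomputable def wavePacket (η : ℝ → ℂ) (a b x y : ℝ) : ℂ :=
  ((b - a : ℝ) : ℂ) * e2pi (-(a * y)) * η ((b - a) * (x - y))

section WavePacket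

variable {η : ℝ → ℂ} {a b : ℝ}

lemma enorm_wavePacket (η : ℝ → ℂ) (hab : a < b) (x y : ℝ) :
    ‖wavePacket η a b x y‖ₑ = ENNReal.ofReal (b - a) * ‖η ((b - a) * (x - y))‖ₑ := by
  rw [wavePacket, enorm_mul, enorm_mul, ← ofReal_norm (e2pi _), norm_e2pi, ENNReal.ofReal_one,
    mul_one, ← ofReal_norm, Complex.norm_real, Real.norm_of_nonneg (sub_nonneg.2 hab.le)]

lemma continuous_uncurry_wavePacket (hη : Continuous η) (a b : ℝ) :
    Continuous (uncurry (wavePacket η a b)) := by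
  unfold uncurry wavePacket; fun_prop

lemma continuous_wavePacket (hη : Continuous η) (a b x : ℝ) : Continuous (wavePacket η a b x) :=
  (continuous_uncurry_wavePacket hη a b).uncurry_left x

lemma exists_norm_wavePacket_le (η : SchwartzMap ℝ ℂ) (a b : ℝ) :
    ∃ M, ∀ x y, ‖wavePacket η a b x y‖ ≤ M := by
  refine ⟨|b - a| * SchwartzMap.seminorm ℝ 0 0 η, fun x y => ?_⟩
  rw [wavePacket, norm_mul, norm_mul, norm_e2pi, mul_one, Complex.norm_real, Real.norm_eq_abs]
  exact mul_le_mul_of_nonneg_left (SchwartzMap.norm_le_seminorm ℝ η _) (abs_nonneg _)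

lemma integrable_comp_mul_sub {E : Type*} [NormedAddCommGroup E] {f : ℝ → E} (hf : Integrable f)
    {l : ℝ} (hl : l ≠ 0) (x : ℝ) : Integrable fun y => f (l * (x - y)) :=
  (hf.comp_mul_left' hl).comp_sub_left x

lemma integrable_wavePacket (hη : Integrable η) (hab : a < b) (x : ℝ) :
    Integrable (wavePacket η a b x) := by
  refine (integrable_comp_mul_sub hη (sub_pos.2 hab).ne' x).bdd_mul (c := ‖((b - a : ℝ) : ℂ)‖)
    (by fun_prop) (.of_forall fun y => ?_)
  rw [norm_mul, norm_e2pi, mul_one]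

lemma fourier_wavePacket (η : ℝ → ℂ) (hab : a < b) (x ξ : ℝ) :
    𝓕 (wavePacket η a b x) ξ = e2pi (-((ξ + a) * x)) * 𝓕 η (-((ξ + a) / (b - a))) := by
  have hl : 0 < b - a := sub_pos.2 hab
  have hl' : ((b - a : ℝ) : ℂ) ≠ 0 := by exact_mod_cast hl.ne'
  set Θ : ℝ → ℂ := fun t => ((b - a : ℝ) : ℂ) * e2pi (-((ξ + a) * x)) *
    (e2pi (-(t * -((ξ + a) / (b - a)))) * η t) with hΘ
  have substitution : ∀ y, e2pi (-(y * ξ)) * wavePacket η a b x y = Θ ((b - a) * (x - y)) := by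
    intro y
    have phase : e2pi (-(y * ξ)) * e2pi (-(a * y)) = e2pi (-((ξ + a) * x)) *
        e2pi (-((b - a) * (x - y) * -((ξ + a) / (b - a)))) := by
      rw [← e2pi_add, ← e2pi_add]
      congr 1
      field_simp
      ring
    simp only [hΘ, wavePacket]
    linear_combination (((b - a : ℝ) : ℂ) * η ((b - a) * (x - y))) * phase
  simp_rw [fourier_eq_integral_e2pi_mul, substitution]
  rw [integral_sub_left_eq_self (fun z => Θ ((b - a) * z)) volume x,
    Measure.integral_comp_mul_left, integral_const_mul, abs_of_pos (inv_pos.2 hl),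
    Complex.real_smul, ← mul_assoc, ← mul_assoc, Complex.ofReal_inv, inv_mul_cancel₀ hl', one_mul]

lemma integrable_fourier_rescaled (η : SchwartzMap ℝ ℂ) (hab : a < b) :
    Integrable fun ξ => 𝓕 (η : ℝ → ℂ) (-((ξ + a) / (b - a))) := by
  refine (integrable_comp_mul_sub (𝓕 η).integrable (inv_pos.2 (sub_pos.2 hab)).ne' (-a)).congr
    (.of_forall fun ξ => ?_)
  dsimp only
  rw [← SchwartzMap.fourier_coe]
  congr 1
  ring

lemma support_fourier_rescaled_subset (hη : support (𝓕 η) ⊆ Icc 0 1) (hab : a < b) :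
    (support fun ξ => 𝓕 η (-((ξ + a) / (b - a)))) ⊆ Icc (-b) (-a) := by
  intro ξ hξ
  obtain ⟨h0, h1⟩ := hη hξ
  have hl : 0 < b - a := sub_pos.2 hab
  rw [← neg_div] at h0 h1
  rw [div_le_one hl] at h1
  have := (le_div_iff₀ hl).1 h0
  constructor <;> linarith

lemma hasSpectrumIn_wavePacket (η : SchwartzMap ℝ ℂ) (hη : support (𝓕 ⇑η) ⊆ Icc 0 1)
    (hab : a < b) (x : ℝ) : HasSpectrumIn (Icc (-b) (-a)) (wavePacket η a b x) where
  continuous := continuous_wavePacket η.continuous a b x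
  integrable := integrable_wavePacket η.integrable hab x
  integrable_fourier := by
    rw [funext (fourier_wavePacket η hab x)]
    exact (integrable_fourier_rescaled η hab).bdd_mul (c := 1) (by fun_prop)
      (.of_forall fun ξ => (norm_e2pi _).le)
  support_fourier_subset := by
    rw [funext (fourier_wavePacket η hab x)]
    exact (support_mul_subset_right _ _).trans (support_fourier_rescaled_subset hη hab)

lemma integrable_prod_wavePacket_mul (hη : Integrable η) (hab : a < b) {g : ℝ → ℂ}
    (hg : Integrable g) :
    Integrable (fun p : ℝ × ℝ => wavePacket η a b p.1 p.2 * g p.1) (volume.prod volume) := by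
  have hl : b - a ≠ 0 := (sub_pos.2 hab).ne'
  have hconv := (hg.convolution_integrand (ContinuousLinearMap.mul ℂ ℂ)
    (hη.comp_mul_left' (neg_ne_zero.2 hl))).swap
  refine (hconv.bdd_mul (f := fun p : ℝ × ℝ => ((b - a : ℝ) : ℂ) * e2pi (-(a * p.2)))
    (c := ‖((b - a : ℝ) : ℂ)‖) (by fun_prop)
    (.of_forall fun p => ?_)).congr (.of_forall fun p => ?_)
  · rw [norm_mul, norm_e2pi, mul_one]
  · simp only [comp_apply, Prod.fst_swap, Prod.snd_swap, ContinuousLinearMap.mul_apply', wavePacket]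
    rw [show -(b - a) * (p.2 - p.1) = (b - a) * (p.1 - p.2) by ring]
    ring

lemma integral_mul_integral_wavePacket_mul (hη : Integrable η) (hab : a < b) {g h : ℝ → ℂ}
    (hg : Integrable g) (hh : AEStronglyMeasurable h) {M : ℝ} (hM : ∀ y, ‖h y‖ ≤ M) :
    ∫ y, h y * ∫ x, wavePacket η a b x y * g x
      = ∫ x, (∫ y, h y * wavePacket η a b x y) * g x := by
  have hprod : Integrable (fun p : ℝ × ℝ => h p.2 * (wavePacket η a b p.1 p.2 * g p.1))
      (volume.prod volume) :=
    (integrable_prod_wavePacket_mul hη hab hg).bdd_mul hh.comp_snd (.of_forall fun p => hM p.2)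
  simp_rw [← integral_const_mul, ← integral_mul_const, mul_assoc]
  exact (integral_integral_swap hprod).symm

lemma fourier_integral_wavePacket_mul (hη : Integrable η) (hab : a < b) {g : ℝ → ℂ}
    (hg : Integrable g) (ξ : ℝ) :
    𝓕 (fun y => ∫ x, wavePacket η a b x y * g x) ξ
      = 𝓕 g (ξ + a) * 𝓕 η (-((ξ + a) / (b - a))) := by
  rw [fourier_eq_integral_e2pi_mul, integral_mul_integral_wavePacket_mul hη hab hg
    (h := fun y => e2pi (-(y * ξ))) (by fun_prop) fun y => (norm_e2pi _).le]
  simp_rw [← fourier_eq_integral_e2pi_mul, fourier_wavePacket η hab]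
  rw [fourier_eq_integral_e2pi_mul g, ← integral_mul_const]
  congr with x
  rw [mul_comm x]
  ring

lemma hasSpectrumIn_integral_wavePacket_mul (η : SchwartzMap ℝ ℂ)
    (hη : support (𝓕 ⇑η) ⊆ Icc 0 1) (hab : a < b) {g : ℝ → ℂ} (hg : Integrable g) :
    HasSpectrumIn (Icc (-b) (-a)) fun y => ∫ x, wavePacket η a b x y * g x where
  continuous := by
    obtain ⟨M, hM⟩ := exists_norm_wavePacket_le η a b
    refine continuous_of_dominated (bound := fun x => M * ‖g x‖) (fun y => ?_)
      (fun y => .of_forall fun x => ?_) (hg.norm.const_mul M) (.of_forall fun x => ?_)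
    · exact ((continuous_uncurry_wavePacket η.continuous a b).comp
        (.prodMk_left y)).aestronglyMeasurable.mul hg.1
    · exact (norm_mul _ _).trans_le (mul_le_mul_of_nonneg_right (hM x y) (norm_nonneg _))
    · exact (continuous_wavePacket η.continuous a b x).mul continuous_const
  integrable := (integrable_prod_wavePacket_mul η.integrable hab hg).integral_prod_right
  integrable_fourier := by
    rw [funext (fourier_integral_wavePacket_mul η.integrable hab hg)]
    refine (integrable_fourier_rescaled η hab).bdd_mul (c := ∫ x, ‖g x‖) ?_ (.of_forall fun ξ =>
      VectorFourier.norm_fourierIntegral_le_integral_norm _ _ _ _ _)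
    exact ((VectorFourier.fourierIntegral_continuous Real.continuous_fourierChar continuous_inner
      hg).comp (continuous_add_const a)).aestronglyMeasurable
  support_fourier_subset := by
    rw [funext (fourier_integral_wavePacket_mul η.integrable hab hg)]
    exact (support_mul_subset_right _ _).trans (support_fourier_rescaled_subset hη hab)

end WavePacket

/-- The Schwartz function `t ↦ t * η t`. -/
noncomputable def mulX (η : SchwartzMap ℝ ℂ) : SchwartzMap ℝ ℂ :=
  SchwartzMap.smulLeftCLM ℂ (fun t : ℝ => t) η

lemma mulX_apply (η : SchwartzMap ℝ ℂ) (t : ℝ) : mulX η t = t * η t := by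
  rw [mulX, SchwartzMap.smulLeftCLM_apply_apply (by fun_prop), Complex.real_smul]

lemma support_fourier_mulX_subset (η : SchwartzMap ℝ ℂ) :
    support (𝓕 ⇑(mulX η)) ⊆ tsupport (𝓕 ⇑η) := by
  have hderiv : deriv (𝓕 ⇑η) = (-2 * π * Complex.I) • 𝓕 ⇑(mulX η) := by
    rw [Real.deriv_fourier η.integrable ((mulX η).integrable.congr (.of_forall fun t => by
      simp only [mulX_apply, Complex.real_smul]))]
    refine Eq.trans ?_ (VectorFourier.fourierIntegral_const_smul _ _ _ _ _)
    congr 1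
    ext t
    simp only [Pi.smul_apply, smul_eq_mul, mulX_apply, mul_assoc]
  rw [← support_const_smul_of_ne_zero (-2 * π * Complex.I) _
    (by simp [Real.pi_ne_zero]), ← hderiv]
  exact support_deriv_subset

lemma lipschitzWith_schwartzMap {F : Type*} [NormedAddCommGroup F] [NormedSpace ℝ F]
    (η : SchwartzMap ℝ F) : LipschitzWith (SchwartzMap.seminorm ℝ 0 1 η).toNNReal η := by
  refine lipschitzWith_of_nnnorm_deriv_le η.differentiable fun t => ?_
  rw [← NNReal.coe_le_coe, Real.coe_toNNReal _ (apply_nonneg _ _), coe_nnnorm]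
  simpa [norm_iteratedFDeriv_eq_norm_iteratedDeriv] using SchwartzMap.le_seminorm ℝ 0 1 η t

lemma lintegral_enorm_sq_schwartzMap_ne_top {F : Type*} [NormedAddCommGroup F] [NormedSpace ℝ F]
    (η : SchwartzMap ℝ F) : ∫⁻ t, ‖η t‖ₑ ^ 2 ≠ ∞ := by
  rw [lintegral_enorm_sq_eq_enorm_toLp_sq (η.memLp 2 volume)]
  finiteness

lemma lintegral_comp_mul_sub (f : ℝ → ℝ≥0∞) {l : ℝ} (hl : l ≠ 0) (x : ℝ) :
    ∫⁻ y, f (l * (x - y)) = ENNReal.ofReal |l⁻¹| * ∫⁻ t, f t := by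
  rw [lintegral_sub_left_eq_self (fun z => f (l * z)) x, ← smul_eq_mul, ← lintegral_smul_measure,
    ← Real.map_volume_mul_left hl]
  exact ((Homeomorph.mulLeft₀ l hl).toMeasurableEquiv.measurableEmbedding.lintegral_map f).symm

section WavePacket

variable {η : ℝ → ℂ} {a b : ℝ}

lemma ofReal_mul_ofReal_inv {t : ℝ} (ht : 0 < t) :
    ENNReal.ofReal t * ENNReal.ofReal t⁻¹ = 1 := by
  rw [← ENNReal.ofReal_mul ht.le, mul_inv_cancel₀ ht.ne', ENNReal.ofReal_one]

lemma lintegral_enorm_wavePacket (η : ℝ → ℂ) (hab : a < b) (x : ℝ) :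
    ∫⁻ y, ‖wavePacket η a b x y‖ₑ = ∫⁻ t, ‖η t‖ₑ := by
  have hl : 0 < b - a := sub_pos.2 hab
  simp_rw [enorm_wavePacket η hab]
  rw [lintegral_const_mul' _ _ ENNReal.ofReal_ne_top,
    lintegral_comp_mul_sub (fun t => ‖η t‖ₑ) hl.ne', abs_of_pos (inv_pos.2 hl), ← mul_assoc,
    ofReal_mul_ofReal_inv hl, one_mul]

lemma lintegral_enorm_wavePacket_left (η : ℝ → ℂ) (hab : a < b) (y : ℝ) :
    ∫⁻ x, ‖wavePacket η a b x y‖ₑ = ∫⁻ t, ‖η t‖ₑ := by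
  have hl : a - b ≠ 0 := (sub_neg.2 hab).ne
  have hrefl : ∀ x, (b - a) * (x - y) = (a - b) * (y - x) := fun x => by ring
  simp_rw [enorm_wavePacket η hab, hrefl]
  rw [lintegral_const_mul' _ _ ENNReal.ofReal_ne_top,
    lintegral_comp_mul_sub (fun t => ‖η t‖ₑ) hl, abs_inv, abs_sub_comm,
    abs_of_pos (sub_pos.2 hab), ← mul_assoc, ofReal_mul_ofReal_inv (sub_pos.2 hab), one_mul]

lemma lintegral_enorm_sq_wavePacket (η : ℝ → ℂ) (hab : a < b) (x : ℝ) :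
    ∫⁻ y, ‖wavePacket η a b x y‖ₑ ^ 2 = ENNReal.ofReal (b - a) * ∫⁻ t, ‖η t‖ₑ ^ 2 := by
  have hl : 0 < b - a := sub_pos.2 hab
  simp_rw [enorm_wavePacket η hab, mul_pow]
  rw [lintegral_const_mul' _ _ (by finiteness),
    lintegral_comp_mul_sub (fun t => ‖η t‖ₑ ^ 2) hl.ne', abs_of_pos (inv_pos.2 hl), ← mul_assoc,
    sq, mul_assoc (ENNReal.ofReal _), ofReal_mul_ofReal_inv hl, mul_one]

lemma lintegral_enorm_sq_wavePacket_sub_le {D : ℝ≥0} (hη : LipschitzWith D η) (hab : a < b)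
    (x c : ℝ) :
    ∫⁻ y, ‖wavePacket η a b x y - wavePacket η a b c y‖ₑ ^ 2
      ≤ ENNReal.ofReal (b - a) ^ 2 * (2 * D * (∫⁻ t, ‖η t‖ₑ) * ENNReal.ofReal |x - c|) := by
  have hl : 0 < b - a := sub_pos.2 hab
  have hpt : ∀ y, ‖wavePacket η a b x y - wavePacket η a b c y‖ₑ ≤
      ENNReal.ofReal (b - a) * (D * (ENNReal.ofReal (b - a) * ENNReal.ofReal |x - c|)) := by
    intro y
    have : wavePacket η a b x y - wavePacket η a b c y
        = wavePacket (fun _ => η ((b - a) * (x - y)) - η ((b - a) * (c - y))) a b x y := by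
      simp only [wavePacket]; ring
    rw [this, enorm_wavePacket _ hab, ← edist_eq_enorm_sub]
    gcongr
    refine (hη _ _).trans_eq ?_
    rw [edist_dist, Real.dist_eq, ← mul_sub, abs_mul, abs_of_pos hl, sub_sub_sub_cancel_right,
      ENNReal.ofReal_mul hl.le]
  calc ∫⁻ y, ‖wavePacket η a b x y - wavePacket η a b c y‖ₑ ^ 2
      ≤ ∫⁻ y, ENNReal.ofReal (b - a) * (D * (ENNReal.ofReal (b - a) * ENNReal.ofReal |x - c|)) *
          (‖wavePacket η a b x y‖ₑ + ‖wavePacket η a b c y‖ₑ) := by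
        simp_rw [sq]
        gcongr with y
        exacts [hpt y, enorm_sub_le]
    _ = ENNReal.ofReal (b - a) * (D * (ENNReal.ofReal (b - a) * ENNReal.ofReal |x - c|)) *
          ((∫⁻ t, ‖η t‖ₑ) + ∫⁻ t, ‖η t‖ₑ) := by
        have hmeas : Measurable fun y => ‖wavePacket η a b x y‖ₑ :=
          (continuous_wavePacket hη.continuous a b x).enorm.measurable
        rw [lintegral_const_mul' _ _ (by finiteness), lintegral_add_left hmeas,
          lintegral_enorm_wavePacket η hab, lintegral_enorm_wavePacket η hab]
    _ = _ := by ring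

lemma sub_mul_wavePacket (φ : SchwartzMap ℝ ℂ) (hab : a < b) (x y : ℝ) :
    ((y - x : ℝ) : ℂ) * wavePacket φ a b x y
      = -((b - a)⁻¹ : ℝ) * wavePacket (mulX φ) a b x y := by
  have hl : (b : ℂ) - a ≠ 0 := by exact_mod_cast (sub_pos.2 hab).ne'
  simp only [wavePacket, mulX_apply]
  push_cast
  field_simp
  ring

end WavePacket

lemma lintegral_Ici_ofReal_inv_sq {r : ℝ} (hr : 0 < r) :
    ∫⁻ t in Ici r, ENNReal.ofReal t⁻¹ ^ 2 = ENNReal.ofReal r⁻¹ := by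
  have hpow : ∀ t ∈ Ioi r, ENNReal.ofReal t⁻¹ ^ 2 = ENNReal.ofReal (t ^ (-2 : ℝ)) := fun t ht => by
    rw [← ENNReal.ofReal_pow (inv_nonneg.2 (hr.trans ht).le), Real.rpow_neg (hr.trans ht).le,
      Real.rpow_two, inv_pow]
  rw [setLIntegral_congr Ioi_ae_eq_Ici.symm, setLIntegral_congr_fun measurableSet_Ioi hpow,
    ← ofReal_integral_eq_lintegral_ofReal
      (integrableOn_Ioi_rpow_of_lt (by norm_num : (-2 : ℝ) < -1) hr)
      ((ae_restrict_iff' measurableSet_Ioi).2 (.of_forall fun t ht =>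
        (Real.rpow_pos_of_pos (hr.trans ht) _).le)),
    integral_Ioi_rpow_of_lt (by norm_num : (-2 : ℝ) < -1) hr]
  norm_num [Real.rpow_neg_one]

lemma setLIntegral_abs_sub_le (f : ℝ → ℝ≥0∞) (c : ℝ) {r : ℝ} (hr : 0 < r) :
    ∫⁻ y in {y | r ≤ |y - c|}, f |y - c| ≤ 2 * ∫⁻ t in Ici r, f t := by
  have hsplit : {y | r ≤ |y - c|} ⊆ (fun y => y - c) ⁻¹' Ici r ∪ (fun y => c - y) ⁻¹' Ici r :=
    fun y (hy : r ≤ |y - c|) => (le_abs.1 hy).imp id fun h => h.trans_eq (neg_sub y c)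
  refine (lintegral_mono_set hsplit).trans ((lintegral_union_le _ _ _).trans_eq ?_)
  rw [two_mul]
  congr 1
  · rw [← (measurePreserving_sub_right volume c).setLIntegral_comp_preimage_emb
      (measurableEmbedding_subRight c) f (Ici r)]
    refine setLIntegral_congr_fun (measurableSet_Ici.preimage (by fun_prop)) fun y hy => ?_
    rw [abs_of_pos (hr.trans_le hy)]
  · rw [← (Measure.measurePreserving_sub_left volume c).setLIntegral_comp_preimage_emb
      (measurableEmbedding_subLeft c) f (Ici r)]
    refine setLIntegral_congr_fun (measurableSet_Ici.preimage (by fun_prop)) fun y hy => ?_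
    rw [abs_sub_comm, abs_of_pos (hr.trans_le hy)]

lemma setLIntegral_le_weighted_sq {G : ℝ → ℝ≥0∞} (hG : AEMeasurable G) (c : ℝ) {r : ℝ}
    (hr : 0 < r) :
    ∫⁻ y in {y | r ≤ |y - c|}, G y
      ≤ (2 * ENNReal.ofReal r⁻¹ * ∫⁻ y, (ENNReal.ofReal |y - c| * G y) ^ 2) ^ (1 / 2 : ℝ) := by
  have hmeas : MeasurableSet {y | r ≤ |y - c|} :=
    measurableSet_le measurable_const (by fun_prop)
  calc ∫⁻ y in {y | r ≤ |y - c|}, G y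
      = ∫⁻ y in {y | r ≤ |y - c|}, ((fun y => ENNReal.ofReal |y - c|⁻¹) *
          fun y => ENNReal.ofReal |y - c| * G y) y := by
        refine setLIntegral_congr_fun hmeas fun y hy => ?_
        rw [Pi.mul_apply, ← mul_assoc, mul_comm (ENNReal.ofReal _),
          ofReal_mul_ofReal_inv (hr.trans_le hy), one_mul]
    _ ≤ (∫⁻ y in {y | r ≤ |y - c|}, ENNReal.ofReal |y - c|⁻¹ ^ (2 : ℝ)) ^ (1 / 2 : ℝ) *
          (∫⁻ y in {y | r ≤ |y - c|}, (ENNReal.ofReal |y - c| * G y) ^ (2 : ℝ)) ^ (1 / 2 : ℝ) :=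
        ENNReal.lintegral_mul_le_Lp_mul_Lq _ Real.HolderConjugate.two_two (by fun_prop)
          (by fun_prop)
    _ ≤ (2 * ENNReal.ofReal r⁻¹) ^ (1 / 2 : ℝ) *
          (∫⁻ y, (ENNReal.ofReal |y - c| * G y) ^ 2) ^ (1 / 2 : ℝ) := by
        simp_rw [ENNReal.rpow_two]
        gcongr
        · rw [← lintegral_Ici_ofReal_inv_sq hr]
          exact setLIntegral_abs_sub_le (fun t => ENNReal.ofReal t⁻¹ ^ 2) c hr
        · exact Measure.restrict_le_self
    _ = _ := (ENNReal.mul_rpow_of_nonneg _ _ (by norm_num)).symm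

lemma sum_enorm_sq_euclideanSpace {𝕜 ι : Type*} [RCLike 𝕜] [Fintype ι] (v : EuclideanSpace 𝕜 ι) :
    ∑ m, ‖v m‖ₑ ^ 2 = ‖v‖ₑ ^ 2 := by
  simp_rw [← ofReal_norm, ← ENNReal.ofReal_pow (norm_nonneg _)]
  rw [EuclideanSpace.norm_sq_eq, ENNReal.ofReal_sum_of_nonneg fun m _ => by positivity]

lemma rpow_half_sq (t : ℝ≥0∞) : (t ^ 2) ^ (1 / 2 : ℝ) = t := by
  rw [← ENNReal.rpow_two, ← ENNReal.rpow_mul]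
  norm_num

section Hormander

variable {ι : Type*} [Fintype ι]

lemma setLIntegral_enorm_sum_mul_le {I : ι → Set ℝ} (hI : Pairwise (Disjoint on I))
    {G : ι → ℝ → ℂ} (hG : ∀ m, Continuous (G m)) {c : ℝ}
    (hspec : ∀ m, HasSpectrumIn (I m) fun y => ((y - c : ℝ) : ℂ) * G m y) {r : ℝ} (hr : 0 < r)
    {A : ℝ≥0∞} {s : Finset ι}
    (hA : ∀ m ∈ s, ∫⁻ y, ‖((y - c : ℝ) : ℂ) * G m y‖ₑ ^ 2 ≤ A * ENNReal.ofReal r)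
    (v : EuclideanSpace ℂ ι) :
    ∫⁻ y in {y | r ≤ |y - c|}, ‖∑ m ∈ s, G m y * v m‖ₑ ≤ (2 * A) ^ (1 / 2 : ℝ) * ‖v‖ₑ := by
  have weight : ∀ y, ENNReal.ofReal |y - c| * ‖∑ m ∈ s, G m y * v m‖ₑ
      = ‖∑ m ∈ s, (v m • fun y => ((y - c : ℝ) : ℂ) * G m y) y‖ₑ := fun y => by
    rw [← Real.norm_eq_abs, ← Complex.norm_real, ofReal_norm, ← enorm_mul, Finset.mul_sum]
    congr 1
    exact Finset.sum_congr rfl fun m _ => by simp only [Pi.smul_apply, smul_eq_mul]; ring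
  have orthogonality : ∫⁻ y, (ENNReal.ofReal |y - c| * ‖∑ m ∈ s, G m y * v m‖ₑ) ^ 2
      ≤ A * ENNReal.ofReal r * ‖v‖ₑ ^ 2 := by
    simp_rw [weight]
    rw [HasSpectrumIn.lintegral_enorm_sq_sum (fun m => (hspec m).const_smul (v m)) hI]
    calc ∑ m ∈ s, ∫⁻ y, ‖(v m • fun y => ((y - c : ℝ) : ℂ) * G m y) y‖ₑ ^ 2
        = ∑ m ∈ s, ‖v m‖ₑ ^ 2 * ∫⁻ y, ‖((y - c : ℝ) : ℂ) * G m y‖ₑ ^ 2 := by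
          simp only [Pi.smul_apply, enorm_smul, mul_pow]
          exact Finset.sum_congr rfl fun m _ => lintegral_const_mul' _ _ (by finiteness)
      _ ≤ ∑ m ∈ s, ‖v m‖ₑ ^ 2 * (A * ENNReal.ofReal r) :=
          Finset.sum_le_sum fun m hm => mul_le_mul_right (hA m hm) _
      _ ≤ A * ENNReal.ofReal r * ‖v‖ₑ ^ 2 := by
          rw [← Finset.sum_mul, mul_comm, ← sum_enorm_sq_euclideanSpace]
          gcongr
          exact Finset.subset_univ s
  refine (setLIntegral_le_weighted_sq (by fun_prop) c hr).trans ?_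
  calc _ ≤ (2 * ENNReal.ofReal r⁻¹ * (A * ENNReal.ofReal r * ‖v‖ₑ ^ 2)) ^ (1 / 2 : ℝ) := by gcongr
    _ = (ENNReal.ofReal r * ENNReal.ofReal r⁻¹ * (2 * A * ‖v‖ₑ ^ 2)) ^ (1 / 2 : ℝ) := by ring_nf
    _ = _ := by
      rw [ofReal_mul_ofReal_inv hr, one_mul, ENNReal.mul_rpow_of_nonneg _ _ (by norm_num),
        rpow_half_sq]

end Hormander

/-! ### Hörmander's condition for the wave packet kernel -/

lemma disjoint_Icc_neg {a b a' b' : ℝ} (h : Disjoint (Icc a b) (Icc a' b')) :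
    Disjoint (Icc (-b) (-a)) (Icc (-b') (-a')) := by
  simp only [← image_neg_Icc]
  exact (disjoint_image_iff neg_injective).2 h

lemma add_sq_le_two_mul (s t : ℝ≥0∞) : (s + t) ^ 2 ≤ 2 * (s ^ 2 + t ^ 2) := by
  simpa only [ENNReal.rpow_two, show (2 : ℝ) - 1 = 1 by norm_num, ENNReal.rpow_one]
    using ENNReal.rpow_add_le_mul_rpow_add_rpow s t (p := 2) one_le_two

section SpatialWeight

variable {a b : ℝ}

lemma support_fourier_mulX_subset_Icc {φ : SchwartzMap ℝ ℂ} (hφ : support (𝓕 ⇑φ) ⊆ Icc 0 1) :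
    support (𝓕 ⇑(mulX φ)) ⊆ Icc 0 1 :=
  (support_fourier_mulX_subset φ).trans (closure_minimal hφ isClosed_Icc)

lemma hasSpectrumIn_sub_mul_wavePacket {φ : SchwartzMap ℝ ℂ} (hφ : support (𝓕 ⇑φ) ⊆ Icc 0 1)
    (hab : a < b) (x : ℝ) :
    HasSpectrumIn (Icc (-b) (-a)) fun y => ((y - x : ℝ) : ℂ) * wavePacket φ a b x y := by
  simp_rw [sub_mul_wavePacket φ hab]
  exact (hasSpectrumIn_wavePacket _ (support_fourier_mulX_subset_Icc hφ) hab x).const_smul _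

lemma sub_mul_wavePacket_sub (φ : SchwartzMap ℝ ℂ) (hab : a < b) (x c y : ℝ) :
    ((y - c : ℝ) : ℂ) * (wavePacket φ a b x y - wavePacket φ a b c y)
      = -((b - a)⁻¹ : ℝ) * (wavePacket (mulX φ) a b x y - wavePacket (mulX φ) a b c y)
        + (x - c : ℝ) * wavePacket φ a b x y := by
  rw [mul_sub, mul_sub _ (wavePacket _ _ _ _ _), ← sub_mul_wavePacket φ hab,
    ← sub_mul_wavePacket φ hab]
  push_cast
  ring

lemma hasSpectrumIn_sub_mul_wavePacket_sub {φ : SchwartzMap ℝ ℂ}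
    (hφ : support (𝓕 ⇑φ) ⊆ Icc 0 1) (hab : a < b) (x c : ℝ) :
    HasSpectrumIn (Icc (-b) (-a))
      fun y => ((y - c : ℝ) : ℂ) * (wavePacket φ a b x y - wavePacket φ a b c y) := by
  convert ((hasSpectrumIn_sub_mul_wavePacket hφ hab x).add
    ((hasSpectrumIn_wavePacket φ hφ hab x).const_smul ((x - c : ℝ) : ℂ))).add
    ((hasSpectrumIn_sub_mul_wavePacket hφ hab c).const_smul (-1)) using 1
  ext y
  simp only [Pi.add_apply, Pi.smul_apply, smul_eq_mul]
  push_cast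
  ring

lemma lintegral_enorm_sq_sub_mul_wavePacket_le (φ : SchwartzMap ℝ ℂ) (hab : a < b) (x : ℝ)
    {r : ℝ} (hr : 1 ≤ (b - a) * r) :
    ∫⁻ y, ‖((y - x : ℝ) : ℂ) * wavePacket φ a b x y‖ₑ ^ 2
      ≤ (∫⁻ t, ‖mulX φ t‖ₑ ^ 2) * ENNReal.ofReal r := by
  have hl : 0 < b - a := sub_pos.2 hab
  simp_rw [sub_mul_wavePacket φ hab, enorm_mul, enorm_neg, mul_pow]
  rw [lintegral_const_mul' _ _ (by finiteness), lintegral_enorm_sq_wavePacket _ hab,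
    ← ofReal_norm, Complex.norm_real, Real.norm_of_nonneg (inv_nonneg.2 hl.le), sq, mul_assoc,
    ← mul_assoc _ (ENNReal.ofReal (b - a)), mul_comm _ (ENNReal.ofReal (b - a)),
    ofReal_mul_ofReal_inv hl, one_mul, mul_comm]
  gcongr
  rwa [inv_le_iff_one_le_mul₀' hl]

lemma lintegral_enorm_sq_sub_mul_wavePacket_sub_le (φ : SchwartzMap ℝ ℂ) {D : ℝ≥0}
    (hD : LipschitzWith D (mulX φ)) (hab : a < b) {x c r : ℝ} (hxc : |x - c| ≤ r)
    (hr : (b - a) * r ≤ 1) :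
    ∫⁻ y, ‖((y - c : ℝ) : ℂ) * (wavePacket φ a b x y - wavePacket φ a b c y)‖ₑ ^ 2
      ≤ 2 * (2 * D * (∫⁻ t, ‖mulX φ t‖ₑ) + ∫⁻ t, ‖φ t‖ₑ ^ 2) * ENNReal.ofReal r := by
  have hl : 0 < b - a := sub_pos.2 hab
  have hrpos : 0 ≤ r := (abs_nonneg _).trans hxc
  have difference : ∫⁻ y, ‖-(((b - a)⁻¹ : ℝ) : ℂ) *
        (wavePacket (mulX φ) a b x y - wavePacket (mulX φ) a b c y)‖ₑ ^ 2
      ≤ 2 * D * (∫⁻ t, ‖mulX φ t‖ₑ) * ENNReal.ofReal r := by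
    simp_rw [enorm_mul, enorm_neg, mul_pow]
    rw [lintegral_const_mul' _ _ (by finiteness), ← ofReal_norm, Complex.norm_real,
      Real.norm_of_nonneg (inv_nonneg.2 hl.le)]
    refine (mul_le_mul_right (lintegral_enorm_sq_wavePacket_sub_le hD hab x c) _).trans ?_
    rw [← mul_assoc, ← mul_pow, mul_comm (ENNReal.ofReal _⁻¹), ofReal_mul_ofReal_inv hl, one_pow,
      one_mul]
    gcongr
  have translation : ∫⁻ y, ‖((x - c : ℝ) : ℂ) * wavePacket φ a b x y‖ₑ ^ 2
      ≤ (∫⁻ t, ‖φ t‖ₑ ^ 2) * ENNReal.ofReal r := by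
    simp_rw [enorm_mul, mul_pow]
    rw [lintegral_const_mul' _ _ (by finiteness), lintegral_enorm_sq_wavePacket _ hab,
      ← ofReal_norm, Complex.norm_real, Real.norm_eq_abs, ← mul_assoc, mul_comm,
      ← ENNReal.ofReal_pow (abs_nonneg _), ← ENNReal.ofReal_mul (by positivity)]
    gcongr
    calc |x - c| ^ 2 * (b - a) ≤ r ^ 2 * (b - a) := by gcongr
      _ = r * ((b - a) * r) := by ring
      _ ≤ r := mul_le_of_le_one_right hrpos hr
  simp_rw [sub_mul_wavePacket_sub φ hab]
  calc _ ≤ ∫⁻ y, 2 * (‖-(((b - a)⁻¹ : ℝ) : ℂ) *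
          (wavePacket (mulX φ) a b x y - wavePacket (mulX φ) a b c y)‖ₑ ^ 2
          + ‖((x - c : ℝ) : ℂ) * wavePacket φ a b x y‖ₑ ^ 2) := by
        gcongr with y
        exact (pow_le_pow_left' (enorm_add_le _ _) 2).trans (add_sq_le_two_mul _ _)
    _ ≤ 2 * (2 * D * (∫⁻ t, ‖mulX φ t‖ₑ) * ENNReal.ofReal r
          + (∫⁻ t, ‖φ t‖ₑ ^ 2) * ENNReal.ofReal r) := by
        have hφ := continuous_wavePacket φ.continuous a b x
        rw [lintegral_const_mul' _ _ (by finiteness), lintegral_add_right _ (by fun_prop)]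
        gcongr
    _ = _ := by ring

end SpatialWeight

section Kernel

variable {ι : Type*} [Fintype ι] {a b : ι → ℝ}

/-- The kernel of the operator `g ↦ ∑ m, ∫ x, wavePacket φ (a m) (b m) x y * g x m`, the transpose
of the (rotated) Littlewood–Paley decomposition along the intervals `[a m, b m]`; it acts on
`ℓ²`-valued functions. -/
noncomputable def wavePacketKernel (φ : ℝ → ℂ) (a b : ι → ℝ) (x y : ℝ) :
    EuclideanSpace ℂ ι →L[ℂ] ℂ :=
  ∑ m, wavePacket φ (a m) (b m) x y • EuclideanSpace.proj m

lemma wavePacketKernel_apply (φ : ℝ → ℂ) (a b : ι → ℝ) (x y : ℝ) (v : EuclideanSpace ℂ ι) :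
    wavePacketKernel φ a b x y v = ∑ m, wavePacket φ (a m) (b m) x y * v m := by
  simp [wavePacketKernel]

lemma wavePacketKernel_sub_apply [DecidableEq ι] (φ : ℝ → ℂ) (a b : ι → ℝ) (s : Finset ι)
    (x c y : ℝ) (v : EuclideanSpace ℂ ι) :
    (wavePacketKernel φ a b x y - wavePacketKernel φ a b c y) v
      = ∑ m ∈ s, (wavePacket φ (a m) (b m) x y - wavePacket φ (a m) (b m) c y) * v m
        + (∑ m ∈ sᶜ, wavePacket φ (a m) (b m) x y * v m
          - ∑ m ∈ sᶜ, wavePacket φ (a m) (b m) c y * v m) := by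
  simp_rw [sub_apply, wavePacketKernel_apply, ← Finset.sum_sub_distrib,
    ← sub_mul]
  exact (Finset.sum_add_sum_compl s _).symm

/-- The constant in Hörmander's condition for `wavePacketKernel φ`; it does not depend on the
intervals. The first term comes from the intervals shorter than the inverse of the scale, the
second from the others. -/
noncomputable def hormanderConst (φ : SchwartzMap ℝ ℂ) : ℝ≥0∞ :=
  (2 * (2 * (2 * (SchwartzMap.seminorm ℝ 0 1 (mulX φ)).toNNReal * (∫⁻ t, ‖mulX φ t‖ₑ)
    + ∫⁻ t, ‖φ t‖ₑ ^ 2))) ^ (1 / 2 : ℝ) + 2 * (2 * ∫⁻ t, ‖mulX φ t‖ₑ ^ 2) ^ (1 / 2 : ℝ)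

lemma hormanderConst_ne_top (φ : SchwartzMap ℝ ℂ) : hormanderConst φ ≠ ∞ := by
  have hφ := lintegral_enorm_sq_schwartzMap_ne_top φ
  have hθ := lintegral_enorm_sq_schwartzMap_ne_top (mulX φ)
  have hθ' : ∫⁻ t, ‖mulX φ t‖ₑ ≠ ∞ := (mulX φ).integrable.2.ne
  unfold hormanderConst
  finiteness

theorem lintegral_wavePacketKernel_sub_le {φ : SchwartzMap ℝ ℂ} (hφ : support (𝓕 ⇑φ) ⊆ Icc 0 1)
    (hab : ∀ m, a m < b m) (hd : Pairwise (Disjoint on fun m => Icc (a m) (b m))) {x c r : ℝ}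
    (hr : 0 < r) (hxc : |x - c| ≤ r) (v : EuclideanSpace ℂ ι) :
    ∫⁻ y in {y | 2 * r ≤ |y - c|},
      ‖(wavePacketKernel φ a b x y - wavePacketKernel φ a b c y) v‖ₑ
        ≤ hormanderConst φ * ‖v‖ₑ := by
  classical
  have hd' : Pairwise (Disjoint on fun m => Icc (-b m) (-a m)) :=
    fun m n hmn => disjoint_Icc_neg (hd hmn)
  have hcont : ∀ m z, Continuous (wavePacket φ (a m) (b m) z) :=
    fun m => continuous_wavePacket φ.continuous _ _
  set fine : Finset ι := {m | (b m - a m) * r ≤ 1} with hfine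
  have fine_bound : ∫⁻ y in {y | r ≤ |y - c|}, ‖∑ m ∈ fine,
      (wavePacket φ (a m) (b m) x y - wavePacket φ (a m) (b m) c y) * v m‖ₑ ≤ _ :=
    setLIntegral_enorm_sum_mul_le hd' (fun m => (hcont m x).sub (hcont m c))
      (fun m => hasSpectrumIn_sub_mul_wavePacket_sub hφ (hab m) x c) hr
      (fun m hm => lintegral_enorm_sq_sub_mul_wavePacket_sub_le φ
        (lipschitzWith_schwartzMap (mulX φ)) (hab m) hxc (by simpa [hfine] using hm)) v
  have coarse_bound : ∀ z, ∫⁻ y in {y | r ≤ |y - z|},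
      ‖∑ m ∈ fineᶜ, wavePacket φ (a m) (b m) z y * v m‖ₑ ≤ _ := fun z =>
    setLIntegral_enorm_sum_mul_le hd' (fun m => hcont m z)
      (fun m => hasSpectrumIn_sub_mul_wavePacket hφ (hab m) z) hr
      (fun m hm => lintegral_enorm_sq_sub_mul_wavePacket_le φ (hab m) z
        (le_of_lt (by simpa [hfine] using hm))) v
  have tail_center : {y | 2 * r ≤ |y - c|} ⊆ {y | r ≤ |y - c|} :=
    fun y (hy : 2 * r ≤ |y - c|) => show r ≤ |y - c| by linarith
  have tail_point : {y | 2 * r ≤ |y - c|} ⊆ {y | r ≤ |y - x|} :=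
    fun y (hy : 2 * r ≤ |y - c|) => show r ≤ |y - x| by linarith [abs_sub_le y x c]
  simp_rw [wavePacketKernel_sub_apply φ a b fine]
  calc _ ≤ ∫⁻ y in {y | 2 * r ≤ |y - c|},
          (‖∑ m ∈ fine, (wavePacket φ (a m) (b m) x y - wavePacket φ (a m) (b m) c y) * v m‖ₑ
          + (‖∑ m ∈ fineᶜ, wavePacket φ (a m) (b m) x y * v m‖ₑ
            + ‖∑ m ∈ fineᶜ, wavePacket φ (a m) (b m) c y * v m‖ₑ)) := by
        gcongr with y
        exact (enorm_add_le _ _).trans (by gcongr; exact enorm_sub_le)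
    _ ≤ _ := by
        rw [lintegral_add_left (by fun_prop), lintegral_add_left (by fun_prop), hormanderConst,
          two_mul ((_ : ℝ≥0∞) ^ (1 / 2 : ℝ)), add_mul, add_mul]
        exact add_le_add ((lintegral_mono_set tail_center).trans fine_bound)
          (add_le_add ((lintegral_mono_set tail_point).trans (coarse_bound x))
            ((lintegral_mono_set tail_center).trans (coarse_bound c)))

end Kernel

/-! ### The `L²` estimate -/

section Schur

variable {α β : Type*} [MeasurableSpace α] [MeasurableSpace β] {μ : Measure α} {ν : Measure β}

lemma lintegral_mul_sq_le {k g : α → ℝ≥0∞} (hk : AEMeasurable k μ) (hg : AEMeasurable g μ) :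
    (∫⁻ x, k x * g x ∂μ) ^ 2 ≤ (∫⁻ x, k x ∂μ) * ∫⁻ x, k x * g x ^ 2 ∂μ := by
  have sq_half : ∀ t : ℝ≥0∞, (t ^ (1 / 2 : ℝ)) ^ 2 = t := fun t => by
    rw [← ENNReal.rpow_two, ← ENNReal.rpow_mul]; norm_num
  have holder := ENNReal.lintegral_mul_le_Lp_mul_Lq μ Real.HolderConjugate.two_two
    (hk.pow_const (1 / 2 : ℝ)) ((hk.pow_const (1 / 2 : ℝ)).mul hg)
  simp_rw [Pi.mul_apply, ← mul_assoc, ← sq, ENNReal.rpow_two, mul_pow, sq_half] at holder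
  refine (pow_le_pow_left' holder 2).trans_eq ?_
  rw [mul_pow, sq_half, sq_half]

lemma lintegral_sq_lintegral_mul_le [SFinite μ] [SFinite ν] {k : α → β → ℝ≥0∞}
    (hk : Measurable (uncurry k)) {g : α → ℝ≥0∞} (hg : AEMeasurable g μ) {A B : ℝ≥0∞}
    (hA : ∀ y, ∫⁻ x, k x y ∂μ ≤ A) (hB : ∀ x, ∫⁻ y, k x y ∂ν ≤ B) :
    ∫⁻ y, (∫⁻ x, k x y * g x ∂μ) ^ 2 ∂ν ≤ A * B * ∫⁻ x, g x ^ 2 ∂μ := by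
  have hk_left : ∀ y, Measurable fun x => k x y := fun _ => hk.of_uncurry_right
  have hk_right : ∀ x, Measurable (k x) := fun _ => hk.of_uncurry_left
  have hprod : AEMeasurable (uncurry fun y x => k x y * g x ^ 2) (ν.prod μ) :=
    (hk.comp measurable_swap).aemeasurable.mul (hg.comp_snd.pow_const 2)
  calc ∫⁻ y, (∫⁻ x, k x y * g x ∂μ) ^ 2 ∂ν
      ≤ ∫⁻ y, A * ∫⁻ x, k x y * g x ^ 2 ∂μ ∂ν := by
        refine lintegral_mono fun y => ?_
        exact (lintegral_mul_sq_le (hk_left y).aemeasurable hg).trans (mul_le_mul_left (hA y) _)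
    _ = A * ∫⁻ x, (∫⁻ y, k x y ∂ν) * g x ^ 2 ∂μ := by
        have hfiber : AEMeasurable (fun y => ∫⁻ x, k x y * g x ^ 2 ∂μ) ν :=
          hprod.lintegral_prod_right'
        rw [lintegral_const_mul'' A hfiber, lintegral_lintegral_swap hprod]
        simp_rw [lintegral_mul_const _ (hk_right _)]
    _ ≤ A * ∫⁻ x, B * g x ^ 2 ∂μ := by
        gcongr with x
        exact hB x
    _ = A * B * ∫⁻ x, g x ^ 2 ∂μ := by
        rw [lintegral_const_mul'' _ (hg.pow_const 2), mul_assoc]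

end Schur

lemma lintegral_enorm_sq_integral_wavePacket_mul_le {η : ℝ → ℂ} (hη : Continuous η) {a b : ℝ}
    (hab : a < b) {g : ℝ → ℂ} (hg : AEStronglyMeasurable g) :
    ∫⁻ y, ‖∫ x, wavePacket η a b x y * g x‖ₑ ^ 2
      ≤ (∫⁻ t, ‖η t‖ₑ) ^ 2 * ∫⁻ x, ‖g x‖ₑ ^ 2 := by
  refine (lintegral_mono fun y => pow_le_pow_left' (enorm_integral_le_lintegral_enorm _) 2).trans ?_
  simp_rw [enorm_mul]
  rw [sq (∫⁻ t, ‖η t‖ₑ)]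
  exact lintegral_sq_lintegral_mul_le (continuous_uncurry_wavePacket hη a b).enorm.measurable
    hg.enorm (fun y => (lintegral_enorm_wavePacket_left η hab y).le)
    (fun x => (lintegral_enorm_wavePacket η hab x).le)

section Kernel

variable {ι : Type*} [Fintype ι] {a b : ι → ℝ}

lemma continuous_uncurry_wavePacketKernel {φ : ℝ → ℂ} (hφ : Continuous φ) (a b : ι → ℝ) :
    Continuous (uncurry (wavePacketKernel φ a b)) :=
  continuous_finsetSum _ fun m _ =>
    (continuous_uncurry_wavePacket hφ (a m) (b m)).smul continuous_const

lemma exists_norm_wavePacketKernel_le (φ : SchwartzMap ℝ ℂ) (a b : ι → ℝ) :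
    ∃ M, ∀ x y, ‖wavePacketKernel φ a b x y‖ ≤ M := by
  choose M hM using fun m => exists_norm_wavePacket_le φ (a m) (b m)
  refine ⟨∑ m, M m * ‖(EuclideanSpace.proj m : EuclideanSpace ℂ ι →L[ℂ] ℂ)‖, fun x y => ?_⟩
  refine norm_sum_le_of_le _ fun m _ => ?_
  rw [norm_smul]
  exact mul_le_mul_of_nonneg_right (hM m x y) (norm_nonneg _)

lemma integral_wavePacketKernel_apply (φ : SchwartzMap ℝ ℂ) (a b : ι → ℝ)
    {u : ℝ → EuclideanSpace ℂ ι} (hu : Integrable u) (y : ℝ) :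
    ∫ x, wavePacketKernel φ a b x y (u x)
      = ∑ m, ∫ x, wavePacket φ (a m) (b m) x y * u x m := by
  have hint : ∀ m, Integrable fun x => wavePacket φ (a m) (b m) x y * u x m := by
    intro m
    obtain ⟨M, hM⟩ := exists_norm_wavePacket_le φ (a m) (b m)
    have hcont := (continuous_uncurry_wavePacket φ.continuous (a m) (b m)).uncurry_right y
    exact (hu.eval_piLp m).bdd_mul (c := M) hcont.aestronglyMeasurable
      (.of_forall fun x => hM x y)
  simp_rw [wavePacketKernel_apply]
  exact integral_finsetSum _ fun m _ => hint m

theorem lintegral_enorm_sq_integral_wavePacketKernel_le {φ : SchwartzMap ℝ ℂ}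
    (hφ : support (𝓕 ⇑φ) ⊆ Icc 0 1) (hab : ∀ m, a m < b m)
    (hd : Pairwise (Disjoint on fun m => Icc (a m) (b m))) {u : ℝ → EuclideanSpace ℂ ι}
    (hu : Integrable u) :
    ∫⁻ y, ‖∫ x, wavePacketKernel φ a b x y (u x)‖ₑ ^ 2
      ≤ (∫⁻ t, ‖φ t‖ₑ) ^ 2 * ∫⁻ x, ‖u x‖ₑ ^ 2 := by
  have hu' := hu.eval_piLp
  simp_rw [integral_wavePacketKernel_apply φ a b hu, ← sum_enorm_sq_euclideanSpace]
  rw [HasSpectrumIn.lintegral_enorm_sq_sum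
      (fun m => hasSpectrumIn_integral_wavePacket_mul φ hφ (hab m) (hu' m))
      (fun m n hmn => disjoint_Icc_neg (hd hmn)),
    lintegral_finsetSum' _ fun m _ => (hu' m).1.enorm.pow_const 2, Finset.mul_sum]
  exact Finset.sum_le_sum fun m _ =>
    lintegral_enorm_sq_integral_wavePacket_mul_le φ.continuous (hab m) (hu' m).1

end Kernel

/-! ### Calderón–Zygmund decomposition -/

section CalderonZygmundFamily

variable {α ι E : Type*} [MeasurableSpace α] {μ : Measure α} {Q : ι → Set α} {τ : ℝ≥0∞}

/-- The sets `Q i` form a Calderón–Zygmund family for the density `G` at height `τ`: they are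
disjoint, the mean of `G` over each of them lies between `τ` and `2 * τ`, and `G ≤ τ` off their
union. -/
structure IsCalderonZygmundFamily (μ : Measure α) (G : α → ℝ≥0∞) (τ : ℝ≥0∞) (Q : ι → Set α) :
    Prop where
  measurableSet : ∀ i, MeasurableSet (Q i)
  pairwise_disjoint : Pairwise (Disjoint on Q)
  measure_ne_top : ∀ i, μ (Q i) ≠ ∞
  le_setLIntegral : ∀ i, τ * μ (Q i) ≤ ∫⁻ x in Q i, G x ∂μ
  setLIntegral_le : ∀ i, ∫⁻ x in Q i, G x ∂μ ≤ 2 * τ * μ (Q i)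
  le_of_notMem : ∀ x ∉ ⋃ i, Q i, G x ≤ τ

namespace IsCalderonZygmundFamily

variable {G : α → ℝ≥0∞}

lemma mul_measure_le (hQ : IsCalderonZygmundFamily μ G τ Q) (hG : Measurable G) (hτ : τ ≠ ∞)
    (i : ι) : τ * μ (Q i) ≤ 2 * ∫⁻ x in Q i ∩ {x | τ / 2 < G x}, G x ∂μ := by
  have hlow : ∫⁻ x in Q i \ {x | τ / 2 < G x}, G x ∂μ ≤ τ / 2 * μ (Q i) := calc
    _ ≤ ∫⁻ _ in Q i \ {x | τ / 2 < G x}, τ / 2 ∂μ :=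
      setLIntegral_mono' ((hQ.measurableSet i).diff (measurableSet_lt measurable_const hG))
        fun x hx => not_lt.1 hx.2
    _ ≤ τ / 2 * μ (Q i) := by
      rw [setLIntegral_const]
      gcongr
      exact sdiff_subset
  have hhalf : τ / 2 * μ (Q i) ≤ ∫⁻ x in Q i ∩ {x | τ / 2 < G x}, G x ∂μ := by
    refine (ENNReal.add_le_add_iff_right (ENNReal.mul_ne_top (ENNReal.div_ne_top hτ two_ne_zero)
      (hQ.measure_ne_top i))).1 ?_
    rw [← add_mul, ENNReal.add_halves]
    refine (hQ.le_setLIntegral i).trans ?_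
    rw [← lintegral_inter_add_sdiff G (Q i) (measurableSet_lt measurable_const hG)]
    gcongr
  calc τ * μ (Q i) = 2 * (τ / 2 * μ (Q i)) := by
        rw [← mul_assoc, ENNReal.mul_div_cancel two_ne_zero ENNReal.ofNat_ne_top]
    _ ≤ _ := by gcongr

variable [Countable ι]

lemma measurableSet_iUnion (hQ : IsCalderonZygmundFamily μ G τ Q) : MeasurableSet (⋃ i, Q i) :=
  .iUnion hQ.measurableSet

lemma mul_measure_iUnion_le (hQ : IsCalderonZygmundFamily μ G τ Q) (hG : Measurable G)
    (hτ : τ ≠ ∞) : τ * μ (⋃ i, Q i) ≤ 2 * ∫⁻ x in {x | τ / 2 < G x}, G x ∂μ := by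
  have hB : MeasurableSet {x | τ / 2 < G x} := measurableSet_lt measurable_const hG
  rw [measure_iUnion hQ.pairwise_disjoint hQ.measurableSet, ← ENNReal.tsum_mul_left]
  refine (ENNReal.tsum_le_tsum (hQ.mul_measure_le hG hτ)).trans ?_
  rw [ENNReal.tsum_mul_left, ← lintegral_iUnion (fun i => (hQ.measurableSet i).inter hB)
    fun i j hij => (hQ.pairwise_disjoint hij).mono inter_subset_left inter_subset_left]
  gcongr
  exact iUnion_subset fun i => inter_subset_right

lemma setLIntegral_iUnion_le (hQ : IsCalderonZygmundFamily μ G τ Q) :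
    ∫⁻ x in ⋃ i, Q i, G x ∂μ ≤ 2 * τ * μ (⋃ i, Q i) := by
  rw [lintegral_iUnion hQ.measurableSet hQ.pairwise_disjoint,
    measure_iUnion hQ.pairwise_disjoint hQ.measurableSet, ← ENNReal.tsum_mul_left]
  exact ENNReal.tsum_le_tsum hQ.setLIntegral_le

lemma measure_iUnion_ne_top (hQ : IsCalderonZygmundFamily μ G τ Q) (hG : ∫⁻ x, G x ∂μ ≠ ∞)
    (hτ : τ ≠ 0) : μ (⋃ i, Q i) ≠ ∞ := by
  have hle : τ * μ (⋃ i, Q i) ≤ ∫⁻ x, G x ∂μ := by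
    rw [measure_iUnion hQ.pairwise_disjoint hQ.measurableSet, ← ENNReal.tsum_mul_left]
    refine (ENNReal.tsum_le_tsum hQ.le_setLIntegral).trans ?_
    rw [← lintegral_iUnion hQ.measurableSet hQ.pairwise_disjoint]
    exact setLIntegral_le_lintegral _ _
  intro htop
  rw [htop, ENNReal.mul_top hτ, top_le_iff] at hle
  exact hG hle

end IsCalderonZygmundFamily

variable [NormedAddCommGroup E] [NormedSpace ℝ E] {g : α → E}

open Classical in
/-- The good part of `g` with respect to the disjoint sets `Q i`: the mean of `g` on each `Q i`,
and `g` itself off their union. -/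
noncomputable def goodPart (μ : Measure α) (Q : ι → Set α) (g : α → E) (x : α) : E :=
  if hx : ∃ i, x ∈ Q i then ⨍ y in Q hx.choose, g y ∂μ else g x

lemma goodPart_of_mem (hQ : Pairwise (Disjoint on Q)) (g : α → E) {i : ι} {x : α} (hx : x ∈ Q i) :
    goodPart μ Q g x = ⨍ y in Q i, g y ∂μ := by
  have hex : ∃ i, x ∈ Q i := ⟨i, hx⟩
  have hchoose : hex.choose = i := by
    by_contra hne
    exact Set.disjoint_left.1 (hQ hne) hex.choose_spec hx
  rw [goodPart, dif_pos hex, hchoose]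

lemma goodPart_of_notMem (g : α → E) {x : α} (hx : x ∉ ⋃ i, Q i) : goodPart μ Q g x = g x :=
  dif_neg (mt mem_iUnion.2 hx)

namespace IsCalderonZygmundFamily

lemma enorm_setAverage_le (hQ : IsCalderonZygmundFamily μ (fun x => ‖g x‖ₑ) τ Q) (i : ι) :
    ‖⨍ x in Q i, g x ∂μ‖ₑ ≤ 2 * τ := calc
  ‖⨍ x in Q i, g x ∂μ‖ₑ ≤ ⨍⁻ x in Q i, ‖g x‖ₑ ∂μ := enorm_integral_le_lintegral_enorm _
  _ = (∫⁻ x in Q i, ‖g x‖ₑ ∂μ) / μ (Q i) := setLAverage_eq _ _ _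
  _ ≤ 2 * τ := ENNReal.div_le_of_le_mul (hQ.setLIntegral_le i)

lemma enorm_goodPart_le (hQ : IsCalderonZygmundFamily μ (fun x => ‖g x‖ₑ) τ Q) {x : α}
    (hx : x ∈ ⋃ i, Q i) : ‖goodPart μ Q g x‖ₑ ≤ 2 * τ := by
  obtain ⟨i, hi⟩ := mem_iUnion.1 hx
  rw [goodPart_of_mem hQ.pairwise_disjoint g hi]
  exact hQ.enorm_setAverage_le i

lemma setIntegral_sub_goodPart [CompleteSpace E]
    (hQ : IsCalderonZygmundFamily μ (fun x => ‖g x‖ₑ) τ Q) (i : ι) :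
    ∫ x in Q i, (g x - goodPart μ Q g x) ∂μ = 0 := by
  have hgood : EqOn (fun x => g x - goodPart μ Q g x) (fun x => g x - ⨍ y in Q i, g y ∂μ) (Q i) :=
    fun x hx => congrArg (g x - ·) (goodPart_of_mem hQ.pairwise_disjoint g hx)
  have := Fact.mk (hQ.measure_ne_top i).lt_top
  rw [setIntegral_congr_fun (hQ.measurableSet i) hgood]
  exact integral_sub_average _ g

variable [Countable ι]

lemma aestronglyMeasurable_goodPart (hQ : IsCalderonZygmundFamily μ (fun x => ‖g x‖ₑ) τ Q)
    (hg : AEStronglyMeasurable g μ) : AEStronglyMeasurable (goodPart μ Q g) μ := by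
  have hon : AEStronglyMeasurable (goodPart μ Q g) (μ.restrict (⋃ i, Q i)) := by
    refine aestronglyMeasurable_iUnion_iff.2 fun i => ?_
    refine (aestronglyMeasurable_const (b := ⨍ x in Q i, g x ∂μ)).congr ?_
    filter_upwards [ae_restrict_mem (hQ.measurableSet i)] with x hx
    exact (goodPart_of_mem hQ.pairwise_disjoint g hx).symm
  have hoff : AEStronglyMeasurable (goodPart μ Q g) (μ.restrict (⋃ i, Q i)ᶜ) := by
    refine hg.restrict.congr ?_
    filter_upwards [ae_restrict_mem hQ.measurableSet_iUnion.compl] with x hx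
    exact (goodPart_of_notMem g hx).symm
  simpa only [union_compl_self, Measure.restrict_univ] using
    aestronglyMeasurable_union_iff.2 ⟨hon, hoff⟩

lemma setLIntegral_enorm_goodPart_le (hQ : IsCalderonZygmundFamily μ (fun x => ‖g x‖ₑ) τ Q) :
    ∫⁻ x in ⋃ i, Q i, ‖goodPart μ Q g x‖ₑ ∂μ ≤ 2 * τ * μ (⋃ i, Q i) := by
  rw [← setLIntegral_const]
  exact setLIntegral_mono' hQ.measurableSet_iUnion fun x => hQ.enorm_goodPart_le

lemma integrable_goodPart (hQ : IsCalderonZygmundFamily μ (fun x => ‖g x‖ₑ) τ Q)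
    (hg : Integrable g μ) (hτ : τ ≠ 0) (hτ' : τ ≠ ∞) : Integrable (goodPart μ Q g) μ := by
  refine ⟨hQ.aestronglyMeasurable_goodPart hg.1, ?_⟩
  rw [hasFiniteIntegral_iff_enorm, ← lintegral_add_compl _ hQ.measurableSet_iUnion]
  refine ENNReal.add_lt_top.2 ⟨hQ.setLIntegral_enorm_goodPart_le.trans_lt ?_, ?_⟩
  · exact ENNReal.mul_lt_top (ENNReal.mul_lt_top ENNReal.ofNat_lt_top hτ'.lt_top)
      (hQ.measure_iUnion_ne_top hg.2.ne hτ).lt_top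
  · rw [setLIntegral_congr_fun hQ.measurableSet_iUnion.compl fun x hx =>
      congrArg enorm (goodPart_of_notMem g hx)]
    exact (setLIntegral_le_lintegral _ _).trans_lt hg.2

lemma setLIntegral_enorm_sub_goodPart_le (hQ : IsCalderonZygmundFamily μ (fun x => ‖g x‖ₑ) τ Q)
    (hg : AEStronglyMeasurable g μ) :
    ∫⁻ x in ⋃ i, Q i, ‖g x - goodPart μ Q g x‖ₑ ∂μ ≤ 4 * τ * μ (⋃ i, Q i) := calc
  _ ≤ ∫⁻ x in ⋃ i, Q i, (‖g x‖ₑ + ‖goodPart μ Q g x‖ₑ) ∂μ := lintegral_mono fun x => enorm_sub_le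
  _ = ∫⁻ x in ⋃ i, Q i, ‖g x‖ₑ ∂μ + ∫⁻ x in ⋃ i, Q i, ‖goodPart μ Q g x‖ₑ ∂μ :=
    lintegral_add_left' hg.restrict.enorm _
  _ ≤ 2 * τ * μ (⋃ i, Q i) + 2 * τ * μ (⋃ i, Q i) :=
    add_le_add hQ.setLIntegral_iUnion_le hQ.setLIntegral_enorm_goodPart_le
  _ = 4 * τ * μ (⋃ i, Q i) := by ring

lemma lintegral_enorm_sq_goodPart_le (hQ : IsCalderonZygmundFamily μ (fun x => ‖g x‖ₑ) τ Q) :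
    ∫⁻ x, ‖goodPart μ Q g x‖ₑ ^ 2 ∂μ
      ≤ ∫⁻ x in {x | ‖g x‖ₑ ≤ τ}, ‖g x‖ₑ ^ 2 ∂μ + 4 * τ ^ 2 * μ (⋃ i, Q i) := by
  rw [← lintegral_add_compl _ hQ.measurableSet_iUnion, add_comm]
  refine add_le_add ?_ ?_
  · rw [setLIntegral_congr_fun hQ.measurableSet_iUnion.compl fun x hx =>
      congrArg (‖·‖ₑ ^ 2) (goodPart_of_notMem g hx)]
    exact lintegral_mono_set hQ.le_of_notMem
  · calc ∫⁻ x in ⋃ i, Q i, ‖goodPart μ Q g x‖ₑ ^ 2 ∂μ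
        ≤ ∫⁻ _ in ⋃ i, Q i, (2 * τ) ^ 2 ∂μ :=
          setLIntegral_mono' hQ.measurableSet_iUnion fun x hx =>
            pow_le_pow_left' (hQ.enorm_goodPart_le hx) 2
      _ = 4 * τ ^ 2 * μ (⋃ i, Q i) := by
          rw [setLIntegral_const]
          ring

end IsCalderonZygmundFamily

end CalderonZygmundFamily

section Dyadic

/-- The half-open dyadic interval of length `2 ^ (-n)` whose left endpoint is `k * 2 ^ (-n)`. -/
def dyadicInterval (n k : ℤ) : Set ℝ := Ico (k * 2 ^ (-n)) (k * 2 ^ (-n) + 2 ^ (-n))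

lemma mem_dyadicInterval_iff {n k : ℤ} {x : ℝ} : x ∈ dyadicInterval n k ↔ ⌊x * 2 ^ n⌋ = k := by
  have hpos : (0 : ℝ) < 2 ^ n := by positivity
  rw [Int.floor_eq_iff, dyadicInterval, mem_Ico, zpow_neg, ← div_eq_mul_inv, div_le_iff₀ hpos,
    ← one_div, ← add_div, lt_div_iff₀ hpos]

lemma volume_dyadicInterval (n k : ℤ) :
    volume (dyadicInterval n k) = ENNReal.ofReal (2 ^ (-n)) := by
  rw [dyadicInterval, Real.volume_Ico, add_sub_cancel_left]

lemma measurableSet_dyadicInterval (n k : ℤ) : MeasurableSet (dyadicInterval n k) :=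
  measurableSet_Ico

lemma volume_dyadicInterval_ne_zero (n k : ℤ) : volume (dyadicInterval n k) ≠ 0 := by
  rw [volume_dyadicInterval]
  exact (ENNReal.ofReal_pos.2 (by positivity)).ne'

lemma volume_dyadicInterval_ne_top (n k : ℤ) : volume (dyadicInterval n k) ≠ ∞ := by
  rw [volume_dyadicInterval]
  exact ENNReal.ofReal_ne_top

lemma floor_mul_zpow_sub (n : ℤ) (d : ℕ) (x : ℝ) :
    ⌊x * 2 ^ (n - d)⌋ = ⌊x * 2 ^ n⌋ / 2 ^ d := by
  have h := Int.floor_div_natCast (x * 2 ^ n) (2 ^ d)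
  push_cast at h
  rw [← h, zpow_sub₀ two_ne_zero, zpow_natCast, mul_div_assoc]

lemma dyadicInterval_subset_ancestor (n k : ℤ) (d : ℕ) :
    dyadicInterval n k ⊆ dyadicInterval (n - d) (k / 2 ^ d) := by
  intro x hx
  rw [mem_dyadicInterval_iff] at hx ⊢
  rw [floor_mul_zpow_sub, hx]

lemma exists_dyadicInterval_subset {x : ℝ} {s : Set ℝ} (hs : s ∈ nhds x) :
    ∃ n : ℤ, dyadicInterval n ⌊x * 2 ^ n⌋ ⊆ s := by
  obtain ⟨ε, hε, hball⟩ := Metric.mem_nhds_iff.1 hs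
  obtain ⟨n, hn⟩ := exists_pow_lt_of_lt_one hε (by norm_num : (2⁻¹ : ℝ) < 1)
  refine ⟨n, fun y hy => hball ?_⟩
  have hx : x ∈ dyadicInterval n ⌊x * 2 ^ (n : ℤ)⌋ := mem_dyadicInterval_iff.2 rfl
  rw [dyadicInterval, mem_Ico, zpow_neg, zpow_natCast, ← inv_pow] at hx hy
  rw [Metric.mem_ball, Real.dist_eq, abs_lt]
  constructor <;> linarith [hx.1, hx.2, hy.1, hy.2]

/-- The dyadic interval indexed by `(n, k)` is heavy if the mean of `G` over it exceeds `τ`. -/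
def IsHeavy (G : ℝ → ℝ≥0∞) (τ : ℝ≥0∞) (n k : ℤ) : Prop :=
  τ * volume (dyadicInterval n k) < ∫⁻ x in dyadicInterval n k, G x

/-- The indices of the heavy dyadic intervals none of whose strict dyadic ancestors is heavy. -/
def maximalHeavy (G : ℝ → ℝ≥0∞) (τ : ℝ≥0∞) : Set (ℤ × ℤ) :=
  {p | IsHeavy G τ p.1 p.2 ∧ ∀ d : ℕ, 1 ≤ d → ¬ IsHeavy G τ (p.1 - d) (p.2 / 2 ^ d)}

variable {G : ℝ → ℝ≥0∞} {τ : ℝ≥0∞}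

lemma exists_isHeavy (hG : LowerSemicontinuous G) {x : ℝ} (hx : τ < G x) :
    ∃ n : ℤ, IsHeavy G τ n ⌊x * 2 ^ n⌋ := by
  obtain ⟨σ, hτσ, hσ⟩ := exists_between hx
  obtain ⟨n, hn⟩ := exists_dyadicInterval_subset (hG x σ hσ)
  refine ⟨n, ?_⟩
  calc τ * volume (dyadicInterval n ⌊x * 2 ^ n⌋)
      < σ * volume (dyadicInterval n ⌊x * 2 ^ n⌋) :=
        ENNReal.mul_lt_mul_left (volume_dyadicInterval_ne_zero _ _)
          (volume_dyadicInterval_ne_top _ _) hτσ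
    _ ≤ ∫⁻ y in dyadicInterval n ⌊x * 2 ^ n⌋, G y := by
        rw [← setLIntegral_const]
        exact setLIntegral_mono' (measurableSet_dyadicInterval _ _) fun y hy => (hn hy).le

lemma exists_le_of_isHeavy (hG : ∫⁻ x, G x ≠ ∞) (hτ : τ ≠ 0) :
    ∃ N : ℤ, ∀ n k, IsHeavy G τ n k → N ≤ n := by
  obtain ⟨N, hN⟩ := pow_unbounded_of_one_lt ((∫⁻ x, G x) / τ).toReal one_lt_two
  refine ⟨-N, fun n k hheavy => ?_⟩
  by_contra! hlt
  have hvol : volume (dyadicInterval n k) < (∫⁻ x, G x) / τ := by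
    refine (ENNReal.lt_div_iff_mul_lt (.inl hτ) (.inr (volume_dyadicInterval_ne_zero n k))).2 ?_
    rw [mul_comm]
    exact hheavy.trans_le (setLIntegral_le_lintegral _ _)
  rw [volume_dyadicInterval, ENNReal.ofReal_lt_iff_lt_toReal (by positivity)
    (ENNReal.div_ne_top hG hτ)] at hvol
  have hpow : (2 : ℝ) ^ N ≤ 2 ^ (-n) := by
    rw [← zpow_natCast]
    exact zpow_le_zpow_right₀ one_le_two (by linarith)
  linarith

lemma exists_mem_maximalHeavy (hG : LowerSemicontinuous G) (hG' : ∫⁻ x, G x ≠ ∞) (hτ : τ ≠ 0)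
    {x : ℝ} (hx : τ < G x) : ∃ p ∈ maximalHeavy G τ, x ∈ dyadicInterval p.1 p.2 := by
  obtain ⟨N, hN⟩ := exists_le_of_isHeavy hG' hτ
  obtain ⟨n, hn, hmin⟩ := Int.exists_least_of_bdd
    ⟨N, fun n (hn : IsHeavy G τ n ⌊x * 2 ^ n⌋) => hN n _ hn⟩ (exists_isHeavy hG hx)
  refine ⟨(n, ⌊x * 2 ^ n⌋), ⟨hn, fun d hd hheavy => ?_⟩, mem_dyadicInterval_iff.2 rfl⟩
  rw [← floor_mul_zpow_sub] at hheavy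
  have := hmin _ hheavy
  omega

lemma eq_of_mem_maximalHeavy {p q : ℤ × ℤ} (hp : p ∈ maximalHeavy G τ) (hq : q ∈ maximalHeavy G τ)
    (hle : p.1 ≤ q.1) {x : ℝ} (hxp : x ∈ dyadicInterval p.1 p.2)
    (hxq : x ∈ dyadicInterval q.1 q.2) : p = q := by
  rw [mem_dyadicInterval_iff] at hxp hxq
  obtain ⟨d, hd⟩ := Int.le.dest hle
  have hlevel : q.1 - d = p.1 := by linarith
  have hancestor : p.2 = q.2 / 2 ^ d := by
    rw [← hxp, ← hxq, ← floor_mul_zpow_sub, hlevel]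
  rcases Nat.eq_zero_or_pos d with rfl | hpos
  · exact Prod.ext (by simpa using hd) (by simpa using hancestor)
  · have hnot := hq.2 d hpos
    rw [hlevel, ← hancestor] at hnot
    exact absurd hp.1 hnot

lemma setLIntegral_le_of_mem_maximalHeavy {p : ℤ × ℤ} (hp : p ∈ maximalHeavy G τ) :
    ∫⁻ x in dyadicInterval p.1 p.2, G x ≤ 2 * τ * volume (dyadicInterval p.1 p.2) := by
  have hparent := not_lt.1 (hp.2 1 le_rfl)
  refine ((lintegral_mono_set (dyadicInterval_subset_ancestor _ _ 1)).trans hparent).trans_eq ?_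
  have hdouble : (2 : ℝ) ^ (-(p.1 - ((1 : ℕ) : ℤ))) = 2 * 2 ^ (-p.1) := by
    rw [Nat.cast_one, neg_sub, sub_eq_add_neg, zpow_add₀ two_ne_zero, zpow_one]
  rw [volume_dyadicInterval, volume_dyadicInterval, hdouble, ENNReal.ofReal_mul zero_le_two,
    ENNReal.ofReal_ofNat]
  ring

theorem isCalderonZygmundFamily_maximalHeavy (hG : LowerSemicontinuous G) (hG' : ∫⁻ x, G x ≠ ∞)
    (hτ : τ ≠ 0) : IsCalderonZygmundFamily volume G τ
      fun p : maximalHeavy G τ => dyadicInterval p.1.1 p.1.2 where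
  measurableSet p := measurableSet_dyadicInterval _ _
  pairwise_disjoint p q hpq := Set.disjoint_left.2 fun x hxp hxq => hpq <| Subtype.ext <| by
    rcases le_total p.1.1 q.1.1 with h | h
    · exact eq_of_mem_maximalHeavy p.2 q.2 h hxp hxq
    · exact (eq_of_mem_maximalHeavy q.2 p.2 h hxq hxp).symm
  measure_ne_top p := volume_dyadicInterval_ne_top _ _
  le_setLIntegral p := p.2.1.le
  setLIntegral_le p := setLIntegral_le_of_mem_maximalHeavy p.2
  le_of_notMem x hx := by
    by_contra! hlt
    obtain ⟨p, hp, hxp⟩ := exists_mem_maximalHeavy hG hG' hτ hlt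
    exact hx (mem_iUnion.2 ⟨⟨p, hp⟩, hxp⟩)

end Dyadic

/-! ### The weak-type estimate for singular kernels -/

lemma two_mul_lt_enorm_subset {α F : Type*} [TopologicalSpace F] [ESeminormedAddMonoid F]
    {f h k : α → F} (hsplit : ∀ y, f y = h y + k y) (X : Set α) (τ : ℝ≥0∞) :
    {y | 2 * τ < ‖f y‖ₑ} ⊆ X ∪ ({y | τ ≤ ‖h y‖ₑ} ∪ {y | τ ≤ ‖k y‖ₑ} \ X) := by
  intro y hy
  by_contra hnot
  simp only [mem_union, mem_sdiff, mem_ofPred_eq, not_or, not_and_not_right, not_le] at hnot hy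
  obtain ⟨hX, hh, hk⟩ := hnot
  rw [hsplit, two_mul] at hy
  exact absurd (hy.trans_le (enorm_add_le _ _))
    (not_lt.2 (add_le_add hh.le (not_lt.1 fun h => hX (hk h.le))))

section SingularKernel

variable {ι E F : Type*} [NormedAddCommGroup E] [NormedSpace ℝ E] [NormedAddCommGroup F]
  [NormedSpace ℝ F] {K : ℝ → ℝ → E →L[ℝ] F} {A τ : ℝ≥0∞} {u g : ℝ → E}

/-- The integral operator with operator-valued kernel `K`, integrated in the first variable. -/
noncomputable def integralOperator (K : ℝ → ℝ → E →L[ℝ] F) (u : ℝ → E) (y : ℝ) : F :=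
  ∫ x, K x y (u x)

/-- Bounded continuous operator-valued kernels satisfying Hörmander's regularity condition in
the variable of integration, with constant `A`, and whose operator is bounded on `L²`, with
squared norm at most `A`. The qualitative bounds only serve to make every integral converge. -/
structure IsSingularKernel (K : ℝ → ℝ → E →L[ℝ] F) (A : ℝ≥0∞) : Prop where
  continuous_uncurry : Continuous (uncurry K)
  exists_norm_le : ∃ M, ∀ x y, ‖K x y‖ ≤ M
  lintegral_sub_le : ∀ ⦃x c r : ℝ⦄, 0 < r → |x - c| ≤ r → ∀ v : E,
    ∫⁻ y in {y | 2 * r ≤ |y - c|}, ‖(K x y - K c y) v‖ₑ ≤ A * ‖v‖ₑ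
  lintegral_enorm_sq_le : ∀ ⦃u : ℝ → E⦄, Integrable u →
    ∫⁻ y, ‖integralOperator K u y‖ₑ ^ 2 ≤ A * ∫⁻ x, ‖u x‖ₑ ^ 2

lemma aestronglyMeasurable_kernel_apply (hK : Continuous (uncurry K)) {μ ν : Measure ℝ}
    [SFinite ν] (hu : AEStronglyMeasurable u μ) :
    AEStronglyMeasurable (fun p : ℝ × ℝ => K p.1 p.2 (u p.1)) (μ.prod ν) := by
  have happly : Continuous fun q : (E →L[ℝ] F) × E => q.1 q.2 := by fun_prop
  exact happly.comp_aestronglyMeasurable (hK.aestronglyMeasurable.prodMk hu.comp_fst)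

namespace IsSingularKernel

lemma integrable_apply (hK : IsSingularKernel K A) (hu : Integrable u) (y : ℝ) :
    Integrable fun x => K x y (u x) := by
  obtain ⟨M, hM⟩ := hK.exists_norm_le
  have happly : Continuous fun q : (E →L[ℝ] F) × E => q.1 q.2 := by fun_prop
  refine (hu.norm.const_mul M).mono' ?_ (.of_forall fun x => (K x y).le_of_opNorm_le (hM x y) _)
  exact happly.comp_aestronglyMeasurable
    ((hK.continuous_uncurry.uncurry_right y).aestronglyMeasurable.prodMk hu.1)

lemma aestronglyMeasurable_integralOperator (hK : IsSingularKernel K A) {ν : Measure ℝ}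
    [SFinite ν] (hu : AEStronglyMeasurable u) : AEStronglyMeasurable (integralOperator K u) ν :=
  (aestronglyMeasurable_kernel_apply hK.continuous_uncurry hu).prod_swap.integral_prod_right'

lemma integralOperator_add (hK : IsSingularKernel K A) (hu : Integrable u) (hg : Integrable g)
    (y : ℝ) : integralOperator K (u + g) y = integralOperator K u y + integralOperator K g y := by
  simp_rw [integralOperator, Pi.add_apply, map_add]
  exact integral_add (hK.integrable_apply hu y) (hK.integrable_apply hg y)

lemma lintegral_enorm_integralOperator_le [CompleteSpace E] [CompleteSpace F]
    (hK : IsSingularKernel K A) (hu : Integrable u)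
    {c r : ℝ} (hr : 0 < r) (hsupp : support u ⊆ Ico c (c + r)) (hmean : ∫ x, u x = 0) :
    ∫⁻ y in {y | 2 * r ≤ |y - c|}, ‖integralOperator K u y‖ₑ ≤ A * ∫⁻ x, ‖u x‖ₑ := by
  have hsub : ∀ y, integralOperator K u y = ∫ x, (K x y - K c y) (u x) := by
    intro y
    simp_rw [sub_apply]
    rw [integral_sub (hK.integrable_apply hu y) ((K c y).integrable_comp hu),
      (K c y).integral_comp_comm hu, hmean, map_zero, sub_zero, integralOperator]
  have hcont : Continuous (uncurry fun x y => K x y - K c y) :=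
    hK.continuous_uncurry.sub ((hK.continuous_uncurry.uncurry_left c).comp continuous_snd)
  calc ∫⁻ y in {y | 2 * r ≤ |y - c|}, ‖integralOperator K u y‖ₑ
      ≤ ∫⁻ y in {y | 2 * r ≤ |y - c|}, ∫⁻ x, ‖(K x y - K c y) (u x)‖ₑ := by
        refine lintegral_mono fun y => ?_
        rw [hsub]
        exact enorm_integral_le_lintegral_enorm _
    _ = ∫⁻ x, ∫⁻ y in {y | 2 * r ≤ |y - c|}, ‖(K x y - K c y) (u x)‖ₑ :=
        lintegral_lintegral_swap (aestronglyMeasurable_kernel_apply hcont hu.1).prod_swap.enorm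
    _ ≤ ∫⁻ x, A * ‖u x‖ₑ := by
        refine lintegral_mono fun x => ?_
        by_cases hx : u x = 0
        · simp [hx]
        · have hmem := hsupp hx
          exact hK.lintegral_sub_le hr (abs_le.2 ⟨by linarith [hmem.1], by linarith [hmem.2]⟩) _
    _ = A * ∫⁻ x, ‖u x‖ₑ := lintegral_const_mul'' _ hu.1.enorm

lemma enorm_integralOperator_le_tsum [Countable ι] (hK : IsSingularKernel K A)
    (hu : Integrable u) {Q : ι → Set ℝ} (hQ : ∀ i, MeasurableSet (Q i))
    (hd : Pairwise (Disjoint on Q)) (hsupp : support u ⊆ ⋃ i, Q i) (y : ℝ) :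
    ‖integralOperator K u y‖ₑ ≤ ∑' i, ‖integralOperator K ((Q i).indicator u) y‖ₑ := by
  have hpiece : ∀ i, integralOperator K ((Q i).indicator u) y = ∫ x in Q i, K x y (u x) := by
    intro i
    rw [← integral_indicator (hQ i), integralOperator]
    congr 1 with x
    by_cases hx : x ∈ Q i <;> simp [hx]
  have hon : integralOperator K u y = ∫ x in ⋃ i, Q i, K x y (u x) := by
    refine (setIntegral_eq_integral_of_forall_compl_eq_zero fun x hx => ?_).symm
    rw [notMem_support.1 fun h => hx (hsupp h), map_zero]
  rw [hon, integral_iUnion hQ hd (hK.integrable_apply hu y).integrableOn]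
  simp_rw [hpiece]
  exact enorm_tsum_le_tsum_enorm

lemma lintegral_compl_enorm_integralOperator_le [CompleteSpace E] [CompleteSpace F] [Countable ι]
    (hK : IsSingularKernel K A) (hu : Integrable u) {c r : ι → ℝ} (hr : ∀ i, 0 < r i)
    (hd : Pairwise (Disjoint on fun i => Ico (c i) (c i + r i)))
    (hsupp : support u ⊆ ⋃ i, Ico (c i) (c i + r i))
    (hmean : ∀ i, ∫ x in Ico (c i) (c i + r i), u x = 0) :
    ∫⁻ y in (⋃ i, Ioo (c i - 2 * r i) (c i + 2 * r i))ᶜ, ‖integralOperator K u y‖ₑ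
      ≤ A * ∫⁻ x in ⋃ i, Ico (c i) (c i + r i), ‖u x‖ₑ := by
  set Q : ι → Set ℝ := fun i => Ico (c i) (c i + r i)
  have hQ : ∀ i, MeasurableSet (Q i) := fun i => measurableSet_Ico
  have hfar : ∀ i, (⋃ i, Ioo (c i - 2 * r i) (c i + 2 * r i))ᶜ ⊆ {y | 2 * r i ≤ |y - c i|} := by
    intro i y hy
    by_contra hlt
    rw [mem_ofPred_eq, not_le, abs_lt] at hlt
    exact hy (mem_iUnion.2 ⟨i, by linarith, by linarith⟩)
  calc ∫⁻ y in (⋃ i, Ioo (c i - 2 * r i) (c i + 2 * r i))ᶜ, ‖integralOperator K u y‖ₑ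
      ≤ ∫⁻ y in (⋃ i, Ioo (c i - 2 * r i) (c i + 2 * r i))ᶜ,
          ∑' i, ‖integralOperator K ((Q i).indicator u) y‖ₑ :=
        lintegral_mono (hK.enorm_integralOperator_le_tsum hu hQ hd hsupp)
    _ = ∑' i, ∫⁻ y in (⋃ i, Ioo (c i - 2 * r i) (c i + 2 * r i))ᶜ,
          ‖integralOperator K ((Q i).indicator u) y‖ₑ :=
        lintegral_tsum fun i =>
          (hK.aestronglyMeasurable_integralOperator (hu.1.indicator (hQ i))).enorm
    _ ≤ ∑' i, A * ∫⁻ x in Q i, ‖u x‖ₑ := by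
        refine ENNReal.tsum_le_tsum fun i => (lintegral_mono_set (hfar i)).trans ?_
        simp_rw [← lintegral_indicator (hQ i), ← enorm_indicator_eq_indicator_enorm]
        exact hK.lintegral_enorm_integralOperator_le (hu.indicator (hQ i)) (hr i)
          support_indicator_subset ((integral_indicator (hQ i)).trans (hmean i))
    _ = A * ∫⁻ x in ⋃ i, Q i, ‖u x‖ₑ := by
        rw [ENNReal.tsum_mul_left, lintegral_iUnion hQ hd]

end IsSingularKernel

lemma volume_iUnion_Ioo_le [Countable ι] {c r : ι → ℝ}
    (hd : Pairwise (Disjoint on fun i => Ico (c i) (c i + r i))) :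
    volume (⋃ i, Ioo (c i - 2 * r i) (c i + 2 * r i))
      ≤ 4 * volume (⋃ i, Ico (c i) (c i + r i)) := by
  rw [measure_iUnion hd fun i => measurableSet_Ico, ← ENNReal.tsum_mul_left]
  refine (measure_iUnion_le _).trans (ENNReal.tsum_le_tsum fun i => ?_)
  have hlength : c i + 2 * r i - (c i - 2 * r i) = 4 * r i := by ring
  rw [Real.volume_Ioo, Real.volume_Ico, hlength, add_sub_cancel_left,
    ENNReal.ofReal_mul zero_le_four, ENNReal.ofReal_ofNat]

namespace IsSingularKernel

lemma sq_mul_volume_integralOperator_goodPart_le [Countable ι] (hK : IsSingularKernel K A)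
    (hg : Integrable g) (hτ : τ ≠ 0) (hτ' : τ ≠ ∞) {Q : ι → Set ℝ}
    (hQ : IsCalderonZygmundFamily volume (fun x => ‖g x‖ₑ) τ Q) :
    τ ^ 2 * volume {y | τ ≤ ‖integralOperator K (goodPart volume Q g) y‖ₑ}
      ≤ A * (∫⁻ x in {x | ‖g x‖ₑ ≤ τ}, ‖g x‖ₑ ^ 2) + 4 * A * τ ^ 2 * volume (⋃ i, Q i) := by
  have hgood := hQ.integrable_goodPart hg hτ hτ'
  have hmarkov := mul_meas_ge_le_lintegral₀
    ((hK.aestronglyMeasurable_integralOperator (ν := volume) hgood.1).enorm.pow_const 2) (τ ^ 2)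
  simp_rw [ENNReal.pow_le_pow_left_iff two_ne_zero] at hmarkov
  refine (hmarkov.trans (hK.lintegral_enorm_sq_le hgood)).trans ?_
  refine (mul_le_mul_right hQ.lintegral_enorm_sq_goodPart_le A).trans_eq ?_
  ring

variable [CompleteSpace E] [CompleteSpace F]

lemma mul_volume_integralOperator_badPart_le [Countable ι] (hK : IsSingularKernel K A)
    (hg : Integrable g) (hτ : τ ≠ 0) (hτ' : τ ≠ ∞) {c r : ι → ℝ} (hr : ∀ i, 0 < r i)
    (hQ : IsCalderonZygmundFamily volume (fun x => ‖g x‖ₑ) τ fun i => Ico (c i) (c i + r i)) :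
    τ * volume ({y | τ ≤ ‖integralOperator K
          (fun x => g x - goodPart volume (fun i => Ico (c i) (c i + r i)) g x) y‖ₑ}
        \ ⋃ i, Ioo (c i - 2 * r i) (c i + 2 * r i))
      ≤ 4 * A * τ * volume (⋃ i, Ico (c i) (c i + r i)) := by
  set bad : ℝ → E := fun x => g x - goodPart volume (fun i => Ico (c i) (c i + r i)) g x
  set X := ⋃ i, Ioo (c i - 2 * r i) (c i + 2 * r i)
  have hX : MeasurableSet X := .iUnion fun i => measurableSet_Ioo
  have hbad : Integrable bad := hg.sub (hQ.integrable_goodPart hg hτ hτ')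
  have hsupp : support bad ⊆ ⋃ i, Ico (c i) (c i + r i) := by
    refine fun x hx => by_contra fun hnot => hx ?_
    exact sub_eq_zero.2 (goodPart_of_notMem g hnot).symm
  have hmarkov := mul_meas_ge_le_lintegral₀ (μ := volume.restrict Xᶜ)
    (hK.aestronglyMeasurable_integralOperator hbad.1).enorm τ
  rw [Measure.restrict_apply' hX.compl, ← sdiff_eq] at hmarkov
  calc _ ≤ ∫⁻ y in Xᶜ, ‖integralOperator K bad y‖ₑ := hmarkov
    _ ≤ A * ∫⁻ x in ⋃ i, Ico (c i) (c i + r i), ‖bad x‖ₑ :=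
        hK.lintegral_compl_enorm_integralOperator_le hbad hr hQ.pairwise_disjoint hsupp
          hQ.setIntegral_sub_goodPart
    _ ≤ A * (4 * τ * volume (⋃ i, Ico (c i) (c i + r i))) := by
        gcongr
        exact hQ.setLIntegral_enorm_sub_goodPart_le hg.1
    _ = 4 * A * τ * volume (⋃ i, Ico (c i) (c i + r i)) := by ring

lemma sq_mul_volume_integralOperator_le_of_family [Countable ι] (hK : IsSingularKernel K A)
    (hgc : Continuous g) (hg : Integrable g) (hτ : τ ≠ 0) (hτ' : τ ≠ ∞) {c r : ι → ℝ}
    (hr : ∀ i, 0 < r i)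
    (hQ : IsCalderonZygmundFamily volume (fun x => ‖g x‖ₑ) τ fun i => Ico (c i) (c i + r i)) :
    τ ^ 2 * volume {y | 2 * τ < ‖integralOperator K g y‖ₑ}
      ≤ A * (∫⁻ x in {x | ‖g x‖ₑ ≤ τ}, ‖g x‖ₑ ^ 2)
        + (8 + 16 * A) * (τ * ∫⁻ x in {x | τ / 2 < ‖g x‖ₑ}, ‖g x‖ₑ) := by
  set V := volume (⋃ i, Ico (c i) (c i + r i))
  set X := ⋃ i, Ioo (c i - 2 * r i) (c i + 2 * r i)
  set good := goodPart volume (fun i => Ico (c i) (c i + r i)) g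
  set S := ∫⁻ x in {x | ‖g x‖ₑ ≤ τ}, ‖g x‖ₑ ^ 2
  have hgood : Integrable good := hQ.integrable_goodPart hg hτ hτ'
  have hsplit : ∀ y, integralOperator K g y
      = integralOperator K good y + integralOperator K (g - good) y := fun y => by
    rw [← hK.integralOperator_add hgood (hg.sub hgood), add_sub_cancel]
  have hX : volume X ≤ 4 * V := volume_iUnion_Ioo_le hQ.pairwise_disjoint
  have hgood_le : τ ^ 2 * volume {y | τ ≤ ‖integralOperator K good y‖ₑ}
      ≤ A * S + 4 * A * τ ^ 2 * V :=
    hK.sq_mul_volume_integralOperator_goodPart_le hg hτ hτ' hQ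
  have hbad_le : τ * volume ({y | τ ≤ ‖integralOperator K (g - good) y‖ₑ} \ X)
      ≤ 4 * A * τ * V :=
    hK.mul_volume_integralOperator_badPart_le hg hτ hτ' hr hQ
  have hvol : τ * V ≤ 2 * ∫⁻ x in {x | τ / 2 < ‖g x‖ₑ}, ‖g x‖ₑ :=
    hQ.mul_measure_iUnion_le hgc.enorm.measurable hτ'
  calc τ ^ 2 * volume {y | 2 * τ < ‖integralOperator K g y‖ₑ}
      ≤ τ ^ 2 * (volume X + (volume {y | τ ≤ ‖integralOperator K good y‖ₑ}
          + volume ({y | τ ≤ ‖integralOperator K (g - good) y‖ₑ} \ X))) := by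
        gcongr
        exact (measure_mono (two_mul_lt_enorm_subset hsplit X τ)).trans
          ((measure_union_le _ _).trans (add_le_add le_rfl (measure_union_le _ _)))
    _ = τ ^ 2 * volume X + (τ ^ 2 * volume {y | τ ≤ ‖integralOperator K good y‖ₑ}
          + τ * (τ * volume ({y | τ ≤ ‖integralOperator K (g - good) y‖ₑ} \ X))) := by ring
    _ ≤ τ ^ 2 * (4 * V) + ((A * S + 4 * A * τ ^ 2 * V) + τ * (4 * A * τ * V)) :=
        add_le_add (mul_le_mul_right hX _) (add_le_add hgood_le (mul_le_mul_right hbad_le _))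
    _ = A * S + (4 + 8 * A) * (τ * (τ * V)) := by ring
    _ ≤ A * S + (4 + 8 * A) * (τ * (2 * ∫⁻ x in {x | τ / 2 < ‖g x‖ₑ}, ‖g x‖ₑ)) := by gcongr
    _ = A * S + (8 + 16 * A) * (τ * ∫⁻ x in {x | τ / 2 < ‖g x‖ₑ}, ‖g x‖ₑ) := by ring

theorem sq_mul_volume_integralOperator_le (hK : IsSingularKernel K A) (hgc : Continuous g)
    (hg : Integrable g) (hτ : τ ≠ 0) (hτ' : τ ≠ ∞) :
    τ ^ 2 * volume {y | 2 * τ < ‖integralOperator K g y‖ₑ}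
      ≤ A * (∫⁻ x in {x | ‖g x‖ₑ ≤ τ}, ‖g x‖ₑ ^ 2)
        + (8 + 16 * A) * (τ * ∫⁻ x in {x | τ / 2 < ‖g x‖ₑ}, ‖g x‖ₑ) :=
  hK.sq_mul_volume_integralOperator_le_of_family hgc hg hτ hτ' (fun _ => by positivity)
    (isCalderonZygmundFamily_maximalHeavy hgc.enorm.lowerSemicontinuous hg.2.ne hτ)

end IsSingularKernel

end SingularKernel

/-! ### Marcinkiewicz interpolation -/

section Marcinkiewicz

variable {X Y E F : Type*} [MeasurableSpace X] [MeasurableSpace Y] {μ : Measure X} {ν : Measure Y}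
  [NormedAddCommGroup E] [NormedAddCommGroup F] {A B : ℝ≥0∞} {r e c : ℝ}

lemma setLIntegral_section_eq {S : Set (X × Y)} (hS : MeasurableSet S) (h : Y → ℝ≥0∞) (x : X) :
    ∫⁻ y in {y | (x, y) ∈ S}, h y ∂ν = ∫⁻ y, S.indicator (fun p => h p.2) (x, y) ∂ν :=
  (lintegral_indicator (measurable_prodMk_left hS) _).symm

lemma measurable_setLIntegral_section [SFinite ν] {S : Set (X × Y)} (hS : MeasurableSet S)
    {h : Y → ℝ≥0∞} (hh : Measurable h) : Measurable fun x => ∫⁻ y in {y | (x, y) ∈ S}, h y ∂ν := by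
  simp_rw [setLIntegral_section_eq hS]
  exact ((hh.comp measurable_snd).indicator hS).lintegral_prod_right'

lemma lintegral_mul_setLIntegral_swap [SFinite μ] [SFinite ν] {S : Set (X × Y)}
    (hS : MeasurableSet S) {w : X → ℝ≥0∞} (hw : Measurable w) {h : Y → ℝ≥0∞} (hh : Measurable h) :
    ∫⁻ x, w x * ∫⁻ y in {y | (x, y) ∈ S}, h y ∂ν ∂μ
      = ∫⁻ y, h y * ∫⁻ x in {x | (x, y) ∈ S}, w x ∂μ ∂ν := by
  have hjoint : Measurable (S.indicator fun p => w p.1 * h p.2) :=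
    ((hw.comp measurable_fst).mul (hh.comp measurable_snd)).indicator hS
  calc ∫⁻ x, w x * ∫⁻ y in {y | (x, y) ∈ S}, h y ∂ν ∂μ
      = ∫⁻ x, ∫⁻ y, S.indicator (fun p => w p.1 * h p.2) (x, y) ∂ν ∂μ := by
        refine lintegral_congr fun x => ?_
        rw [← lintegral_const_mul _ hh]
        exact (lintegral_indicator (measurable_prodMk_left hS) _).symm
    _ = ∫⁻ y, ∫⁻ x, S.indicator (fun p => w p.1 * h p.2) (x, y) ∂μ ∂ν :=
        lintegral_lintegral_swap hjoint.aemeasurable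
    _ = ∫⁻ y, h y * ∫⁻ x in {x | (x, y) ∈ S}, w x ∂μ ∂ν := by
        refine lintegral_congr fun y => ?_
        rw [← lintegral_const_mul _ hw]
        simp_rw [mul_comm (h y)]
        exact lintegral_indicator (measurable_prodMk_right hS) _

lemma setLIntegral_Ioi_ofReal_rpow (he : e < -1) (hc : 0 < c) :
    ∫⁻ t in Ioi c, ENNReal.ofReal t ^ e
      = ENNReal.ofReal (-(e + 1))⁻¹ * ENNReal.ofReal c ^ (e + 1) := by
  have hpos : ∀ t ∈ Ioi c, ENNReal.ofReal t ^ e = ENNReal.ofReal (t ^ e) := fun t ht =>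
    ENNReal.ofReal_rpow_of_pos (hc.trans ht)
  rw [setLIntegral_congr_fun measurableSet_Ioi hpos,
    ← ofReal_integral_eq_lintegral_ofReal (integrableOn_Ioi_rpow_of_lt he hc),
    integral_Ioi_rpow_of_lt he hc, ENNReal.ofReal_rpow_of_pos hc,
    ← ENNReal.ofReal_mul (inv_nonneg.2 (by linarith)), inv_neg, neg_mul, inv_mul_eq_div, neg_div]
  filter_upwards [ae_restrict_mem measurableSet_Ioi] with t ht
  exact rpow_nonneg (hc.trans ht).le e

lemma setLIntegral_Ioc_ofReal_rpow (he : -1 < e) (hc : 0 < c) :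
    ∫⁻ t in Ioc 0 c, ENNReal.ofReal t ^ e
      = ENNReal.ofReal (e + 1)⁻¹ * ENNReal.ofReal c ^ (e + 1) := by
  have hpos : ∀ t ∈ Ioc 0 c, ENNReal.ofReal t ^ e = ENNReal.ofReal (t ^ e) := fun t ht =>
    ENNReal.ofReal_rpow_of_pos ht.1
  have hint := (intervalIntegrable_iff_integrableOn_Ioc_of_le hc.le).1
    (intervalIntegral.intervalIntegrable_rpow' (a := 0) (b := c) he)
  rw [setLIntegral_congr_fun measurableSet_Ioc hpos, ← ofReal_integral_eq_lintegral_ofReal hint,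
    ← intervalIntegral.integral_of_le hc.le, integral_rpow (.inl he), zero_rpow (by linarith),
    sub_zero, ENNReal.ofReal_rpow_of_pos hc, ← ENNReal.ofReal_mul (inv_nonneg.2 (by linarith)),
    inv_mul_eq_div]
  filter_upwards [ae_restrict_mem measurableSet_Ioc] with t ht
  exact rpow_nonneg ht.1.le e

lemma enorm_sq_mul_setLIntegral_rpow_le (hr : r < 2) (z : E) :
    ‖z‖ₑ ^ 2 * ∫⁻ t in {t | ‖z‖ₑ ≤ ENNReal.ofReal t}, ENNReal.ofReal t ^ (r - 3)
        ∂volume.restrict (Ioi 0)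
      ≤ ENNReal.ofReal (2 - r)⁻¹ * ‖z‖ₑ ^ r := by
  rcases eq_or_ne z 0 with rfl | hz
  · simp
  have hset : {t | ‖z‖ₑ ≤ ENNReal.ofReal t} = Ici ‖z‖ := by
    ext t
    rw [mem_ofPred_eq, mem_Ici, ← ofReal_norm, ENNReal.ofReal_le_ofReal_iff']
    simp [hz]
  have hinter : Ici ‖z‖ ∩ Ioi 0 = Ici ‖z‖ :=
    inter_eq_left.2 fun t ht => (norm_pos_iff.2 hz).trans_le ht
  rw [hset, Measure.restrict_restrict measurableSet_Ici, hinter,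
    setLIntegral_congr Ioi_ae_eq_Ici.symm,
    setLIntegral_Ioi_ofReal_rpow (by linarith) (norm_pos_iff.2 hz), ofReal_norm, mul_left_comm,
    ← ENNReal.rpow_two, ← ENNReal.rpow_add _ _ (enorm_ne_zero.2 hz) enorm_ne_top]
  refine le_of_eq ?_
  ring_nf

lemma enorm_mul_setLIntegral_rpow_le (hr : 1 < r) (z : E) :
    ‖z‖ₑ * ∫⁻ t in {t | ENNReal.ofReal t / 2 < ‖z‖ₑ}, ENNReal.ofReal t ^ (r - 2)
        ∂volume.restrict (Ioi 0)
      ≤ 2 ^ (r - 1) * ENNReal.ofReal (r - 1)⁻¹ * ‖z‖ₑ ^ r := by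
  rcases eq_or_ne z 0 with rfl | hz
  · simp
  have hz' : 0 < 2 * ‖z‖ := by positivity
  have hset : {t | ENNReal.ofReal t / 2 < ‖z‖ₑ} = Iio (2 * ‖z‖) := by
    ext t
    rw [mem_ofPred_eq, mem_Iio, ENNReal.div_lt_iff (by simp) (by simp), ← ofReal_norm, mul_comm,
      ← ENNReal.ofReal_ofNat 2, ← ENNReal.ofReal_mul zero_le_two, ENNReal.ofReal_lt_ofReal_iff hz']
  have hpow : ‖z‖ₑ * ‖z‖ₑ ^ (r - 1) = ‖z‖ₑ ^ r := by
    nth_rw 1 [← ENNReal.rpow_one ‖z‖ₑ]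
    rw [← ENNReal.rpow_add _ _ (enorm_ne_zero.2 hz) enorm_ne_top, add_sub_cancel]
  rw [hset, Measure.restrict_restrict measurableSet_Iio, Iio_inter_Ioi,
    setLIntegral_congr Ioo_ae_eq_Ioc, setLIntegral_Ioc_ofReal_rpow (by linarith) hz',
    ENNReal.ofReal_mul zero_le_two, ofReal_norm, ENNReal.ofReal_ofNat,
    ENNReal.mul_rpow_of_nonneg _ _ (by linarith), ← hpow]
  refine le_of_eq ?_
  ring_nf

lemma lintegral_enorm_rpow_eq_lintegral_meas_lt {f : Y → F} (hf : AEStronglyMeasurable f ν)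
    (hr : 0 < r) :
    ∫⁻ y, ‖f y‖ₑ ^ r ∂ν = 2 ^ r * ENNReal.ofReal r *
      ∫⁻ t in Ioi 0, ENNReal.ofReal t ^ (r - 1) * ν {y | 2 * ENNReal.ofReal t < ‖f y‖ₑ} := by
  have hhalf : ∀ y, ‖f y‖ₑ ^ r = 2 ^ r * ENNReal.ofReal ((‖f y‖ / 2) ^ r) := by
    intro y
    rw [← ENNReal.ofReal_rpow_of_nonneg (by positivity) hr.le,
      ← ENNReal.mul_rpow_of_nonneg _ _ hr.le, ← ENNReal.ofReal_ofNat 2,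
      ← ENNReal.ofReal_mul zero_le_two, mul_div_cancel₀ _ two_ne_zero, ofReal_norm]
  simp_rw [hhalf]
  have hnonneg : ∀ y, 0 ≤ ‖f y‖ / 2 := fun y => by positivity
  rw [lintegral_const_mul' _ _ (by finiteness), lintegral_rpow_eq_lintegral_meas_lt_mul ν
    (.of_forall hnonneg) (hf.norm.aemeasurable.div_const 2) hr, mul_assoc]
  congr 2
  refine setLIntegral_congr_fun measurableSet_Ioi fun t ht => ?_
  have hset : {y | t < ‖f y‖ / 2} = {y | 2 * ENNReal.ofReal t < ‖f y‖ₑ} := by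
    ext y
    rw [mem_ofPred_eq, mem_ofPred_eq, lt_div_iff₀' zero_lt_two, ← ENNReal.ofReal_ofNat 2,
      ← ENNReal.ofReal_mul zero_le_two, ← ofReal_norm,
      ENNReal.ofReal_lt_ofReal_iff_of_nonneg (by have := mem_Ioi.1 ht; positivity)]
  rw [← ENNReal.ofReal_rpow_of_pos ht, mul_comm, hset]

lemma rpow_sub_one_mul_le_of_sq_mul_le {τ U S T : ℝ≥0∞} (hτ : τ ≠ 0) (hτ' : τ ≠ ∞)
    (h : τ ^ 2 * U ≤ A * S + B * (τ * T)) :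
    τ ^ (r - 1) * U ≤ A * (τ ^ (r - 3) * S) + B * (τ ^ (r - 2) * T) := by
  have hsq : τ ^ (r - 1) = τ ^ (r - 3) * τ ^ 2 := by
    rw [← ENNReal.rpow_two, ← ENNReal.rpow_add _ _ hτ hτ']
    ring_nf
  have hone : τ ^ (r - 2) = τ ^ (r - 3) * τ := by
    nth_rw 3 [← ENNReal.rpow_one τ]
    rw [← ENNReal.rpow_add _ _ hτ hτ']
    ring_nf
  rw [hsq, hone, mul_assoc]
  refine (mul_le_mul_right h _).trans_eq ?_
  ring

/-- The constant in the interpolation estimate `lintegral_enorm_rpow_le_of_weak_estimate`. -/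
noncomputable def marcinkiewiczConst (A B : ℝ≥0∞) (r : ℝ) : ℝ≥0∞ :=
  2 ^ r * ENNReal.ofReal r *
    (A * ENNReal.ofReal (2 - r)⁻¹ + B * (2 ^ (r - 1) * ENNReal.ofReal (r - 1)⁻¹))

lemma marcinkiewiczConst_ne_top (hA : A ≠ ∞) (hB : B ≠ ∞) (r : ℝ) :
    marcinkiewiczConst A B r ≠ ∞ := by
  unfold marcinkiewiczConst
  finiteness

theorem lintegral_enorm_rpow_le_of_weak_estimate [SFinite μ] {f : Y → F}
    (hf : AEStronglyMeasurable f ν) {g : X → E} (hg : StronglyMeasurable g) (hr : 1 < r)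
    (hr' : r < 2)
    (hweak : ∀ τ : ℝ≥0∞, τ ≠ 0 → τ ≠ ∞ → τ ^ 2 * ν {y | 2 * τ < ‖f y‖ₑ}
      ≤ A * (∫⁻ x in {x | ‖g x‖ₑ ≤ τ}, ‖g x‖ₑ ^ 2 ∂μ)
        + B * (τ * ∫⁻ x in {x | τ / 2 < ‖g x‖ₑ}, ‖g x‖ₑ ∂μ)) :
    ∫⁻ y, ‖f y‖ₑ ^ r ∂ν ≤ marcinkiewiczConst A B r * ∫⁻ x, ‖g x‖ₑ ^ r ∂μ := by
  have hpow : ∀ e : ℝ, Measurable fun t => ENNReal.ofReal t ^ e := fun e => by fun_prop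
  have hsmall : MeasurableSet {p : ℝ × X | ‖g p.2‖ₑ ≤ ENNReal.ofReal p.1} :=
    measurableSet_le (hg.enorm.comp measurable_snd) (by fun_prop)
  have hlarge : MeasurableSet {p : ℝ × X | ENNReal.ofReal p.1 / 2 < ‖g p.2‖ₑ} :=
    measurableSet_lt (by fun_prop) (hg.enorm.comp measurable_snd)
  rw [lintegral_enorm_rpow_eq_lintegral_meas_lt hf (by linarith), marcinkiewiczConst,
    mul_assoc (2 ^ r * ENNReal.ofReal r)]
  refine mul_le_mul_right ?_ _
  calc _ ≤ _ := setLIntegral_mono' measurableSet_Ioi fun t ht =>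
        rpow_sub_one_mul_le_of_sq_mul_le (ENNReal.ofReal_pos.2 ht).ne' ENNReal.ofReal_ne_top
          (hweak _ (ENNReal.ofReal_pos.2 ht).ne' ENNReal.ofReal_ne_top)
    _ = A * (∫⁻ t in Ioi 0, ENNReal.ofReal t ^ (r - 3) *
            ∫⁻ x in {x | ‖g x‖ₑ ≤ ENNReal.ofReal t}, ‖g x‖ₑ ^ 2 ∂μ)
        + B * (∫⁻ t in Ioi 0, ENNReal.ofReal t ^ (r - 2) *
            ∫⁻ x in {x | ENNReal.ofReal t / 2 < ‖g x‖ₑ}, ‖g x‖ₑ ∂μ) := by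
        have hmeas := (hpow (r - 3)).mul
          (measurable_setLIntegral_section (ν := μ) hsmall (hg.enorm.pow_const 2))
        have hmeas' := (hpow (r - 2)).mul (measurable_setLIntegral_section (ν := μ) hlarge hg.enorm)
        exact (lintegral_add_left (hmeas.const_mul A) _).trans
          (congrArg₂ (· + ·) (lintegral_const_mul A hmeas) (lintegral_const_mul B hmeas'))
    _ = A * (∫⁻ x, ‖g x‖ₑ ^ 2 * ∫⁻ t in {t | ‖g x‖ₑ ≤ ENNReal.ofReal t},
            ENNReal.ofReal t ^ (r - 3) ∂volume.restrict (Ioi 0) ∂μ)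
        + B * (∫⁻ x, ‖g x‖ₑ * ∫⁻ t in {t | ENNReal.ofReal t / 2 < ‖g x‖ₑ},
            ENNReal.ofReal t ^ (r - 2) ∂volume.restrict (Ioi 0) ∂μ) := by
        congr 2
        · exact lintegral_mul_setLIntegral_swap hsmall (hpow _) (hg.enorm.pow_const 2)
        · exact lintegral_mul_setLIntegral_swap hlarge (hpow _) hg.enorm
    _ ≤ A * (∫⁻ x, ENNReal.ofReal (2 - r)⁻¹ * ‖g x‖ₑ ^ r ∂μ)
        + B * ∫⁻ x, 2 ^ (r - 1) * ENNReal.ofReal (r - 1)⁻¹ * ‖g x‖ₑ ^ r ∂μ := by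
        refine add_le_add (mul_le_mul_right (lintegral_mono fun x => ?_) _)
          (mul_le_mul_right (lintegral_mono fun x => ?_) _)
        · exact enorm_sq_mul_setLIntegral_rpow_le hr' (g x)
        · exact enorm_mul_setLIntegral_rpow_le hr (g x)
    _ = (A * ENNReal.ofReal (2 - r)⁻¹ + B * (2 ^ (r - 1) * ENNReal.ofReal (r - 1)⁻¹))
          * ∫⁻ x, ‖g x‖ₑ ^ r ∂μ := by
        rw [lintegral_const_mul' _ _ (by finiteness), lintegral_const_mul' _ _ (by finiteness)]
        ring

end Marcinkiewicz

/-- The constant in the `L^r` estimate `IsSingularKernel.lintegral_enorm_rpow_integralOperator_le`: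
interpolation gives it for `r < 2`, and the `L²` hypothesis for `r = 2`. -/
noncomputable def singularIntegralConst (A : ℝ≥0∞) (r : ℝ) : ℝ≥0∞ :=
  A + marcinkiewiczConst A (8 + 16 * A) r

lemma singularIntegralConst_ne_top {A : ℝ≥0∞} (hA : A ≠ ∞) (r : ℝ) :
    singularIntegralConst A r ≠ ∞ :=
  ENNReal.add_ne_top.2 ⟨hA, marcinkiewiczConst_ne_top hA (by finiteness) r⟩

theorem IsSingularKernel.lintegral_enorm_rpow_integralOperator_le {E F : Type*}
    [NormedAddCommGroup E] [NormedSpace ℝ E] [CompleteSpace E] [NormedAddCommGroup F]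
    [NormedSpace ℝ F] [CompleteSpace F] {K : ℝ → ℝ → E →L[ℝ] F} {A : ℝ≥0∞}
    (hK : IsSingularKernel K A) {g : ℝ → E} (hgc : Continuous g) (hg : Integrable g) {r : ℝ}
    (hr : 1 < r) (hr' : r ≤ 2) :
    ∫⁻ y, ‖integralOperator K g y‖ₑ ^ r ≤ singularIntegralConst A r * ∫⁻ x, ‖g x‖ₑ ^ r := by
  rcases hr'.eq_or_lt with rfl | hr'
  · simp_rw [ENNReal.rpow_two]
    exact (hK.lintegral_enorm_sq_le hg).trans (mul_le_mul_left le_self_add _)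
  · refine (lintegral_enorm_rpow_le_of_weak_estimate
      (hK.aestronglyMeasurable_integralOperator hg.1) hgc.stronglyMeasurable hr hr'
      fun τ hτ hτ' => hK.sq_mul_volume_integralOperator_le hgc hg hτ hτ').trans ?_
    exact mul_le_mul_left le_add_self _

lemma isSingularKernel_wavePacketKernel {ι : Type*} [Fintype ι] {φ : SchwartzMap ℝ ℂ}
    (hφ : support (𝓕 ⇑φ) ⊆ Icc 0 1) {a b : ι → ℝ} (hab : ∀ m, a m < b m)
    (hd : Pairwise (Disjoint on fun m => Icc (a m) (b m))) :
    IsSingularKernel (fun x y => (wavePacketKernel φ a b x y).restrictScalars ℝ)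
      (hormanderConst φ + (∫⁻ t, ‖φ t‖ₑ) ^ 2) where
  continuous_uncurry := (ContinuousLinearMap.continuous_restrictScalars ℝ).comp
    (continuous_uncurry_wavePacketKernel φ.continuous a b)
  exists_norm_le := by
    obtain ⟨M, hM⟩ := exists_norm_wavePacketKernel_le φ a b
    exact ⟨M, fun x y => (ContinuousLinearMap.norm_restrictScalars _).trans_le (hM x y)⟩
  lintegral_sub_le _ _ _ hr hxc v :=
    (lintegral_wavePacketKernel_sub_le hφ hab hd hr hxc v).trans
      (mul_le_mul_left le_self_add _)
  lintegral_enorm_sq_le _ hu :=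
    (lintegral_enorm_sq_integral_wavePacketKernel_le hφ hab hd hu).trans
      (mul_le_mul_left le_add_self _)

section Duality

lemma rpow_one_div_le_of_le_mul_rpow {I C : ℝ≥0∞} {p r : ℝ} (hpr : p.HolderConjugate r) (hI : I ≠ ∞)
    (h : I ≤ C * I ^ (1 / r)) : I ^ (1 / p) ≤ C := by
  rcases eq_or_ne I 0 with rfl | hI0
  · rw [ENNReal.zero_rpow_of_pos hpr.one_div_pos]
    exact zero_le
  have hsplit : I ^ (1 / p) * I ^ (1 / r) = I := by
    rw [← ENNReal.rpow_add _ _ hI0 hI, one_div, one_div, hpr.inv_add_inv_eq_one, ENNReal.rpow_one]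
  have hpos : I ^ (1 / r) ≠ 0 := (ENNReal.rpow_pos hI0.bot_lt hI).ne'
  have htop : I ^ (1 / r) ≠ ∞ := ENNReal.rpow_ne_top_of_nonneg hpr.symm.one_div_nonneg hI
  rwa [← ENNReal.mul_le_mul_iff_left hpos htop, hsplit]

variable {X 𝕜 E : Type*} [TopologicalSpace X] [MeasurableSpace X] [OpensMeasurableSpace X]
  {μ : Measure X} [RCLike 𝕜] [NormedAddCommGroup E] [InnerProductSpace 𝕜 E]

lemma norm_rpow_smul_self {p : ℝ} (hp : 2 ≤ p) (v : E) :
    ‖((‖v‖ ^ (p - 2) : ℝ) : 𝕜) • v‖ = ‖v‖ ^ (p - 1) := by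
  rw [norm_smul, RCLike.norm_ofReal, abs_of_nonneg (by positivity),
    ← Real.rpow_add_one' (norm_nonneg v) (by linarith)]
  ring_nf

lemma inner_rpow_smul_self {p : ℝ} (hp : 2 ≤ p) (v : E) :
    inner 𝕜 v (((‖v‖ ^ (p - 2) : ℝ) : 𝕜) • v) = ((‖v‖ ^ p : ℝ) : 𝕜) := by
  have hsplit : ‖v‖ ^ p = ‖v‖ ^ (p - 2) * ‖v‖ ^ 2 := by
    rw [← Real.rpow_add_natCast' (norm_nonneg v) (by push_cast; linarith)]
    push_cast
    ring_nf
  rw [inner_smul_right, inner_self_eq_norm_sq_to_K, hsplit]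
  push_cast
  rfl

theorem lintegral_enorm_rpow_le_of_forall_integral_inner_le [SecondCountableTopologyEither X E]
    {p r : ℝ} (hp : 2 ≤ p) (hpr : p.HolderConjugate r) {u : X → E} (huc : Continuous u)
    (hu : Integrable u μ) {M : ℝ} (hM : ∀ x, ‖u x‖ ≤ M) {C : ℝ≥0∞}
    (hdual : ∀ g : X → E, Continuous g → Integrable g μ →
      ‖∫ x, inner 𝕜 (u x) (g x) ∂μ‖ₑ ≤ C * (∫⁻ x, ‖g x‖ₑ ^ r ∂μ) ^ (1 / r)) :
    (∫⁻ x, ‖u x‖ₑ ^ p ∂μ) ^ (1 / p) ≤ C := by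
  have hp2 : 0 ≤ p - 2 := sub_nonneg.2 hp
  have hw : Continuous fun x => ((‖u x‖ ^ (p - 2) : ℝ) : 𝕜) :=
    RCLike.continuous_ofReal.comp (huc.norm.rpow_const fun x => .inr hp2)
  have hwM : ∀ x, ‖((‖u x‖ ^ (p - 2) : ℝ) : 𝕜)‖ ≤ M ^ (p - 2) := fun x => by
    rw [RCLike.norm_ofReal, abs_of_nonneg (by positivity)]
    exact Real.rpow_le_rpow (norm_nonneg _) (hM x) hp2
  -- Hölder's inequality for `⟪u, g⟫` is an equality at this `g`.
  set g : X → E := fun x => ((‖u x‖ ^ (p - 2) : ℝ) : 𝕜) • u x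
  have hg : Integrable g μ := hu.bdd_smul _ hw.aestronglyMeasurable (.of_forall hwM)
  have hg_norm : ∀ x, ‖g x‖ = ‖u x‖ ^ (p - 1) := fun x => norm_rpow_smul_self hp (u x)
  have hg_rpow : ∀ x, ‖g x‖ₑ ^ r = ‖u x‖ₑ ^ p := fun x => by
    rw [← enorm_norm, hg_norm, Real.enorm_rpow_of_nonneg (norm_nonneg _) hpr.sub_one_pos.le,
      ← ENNReal.rpow_mul, hpr.sub_one_mul_conj, enorm_norm]
  have hup : Integrable (fun x => ‖u x‖ ^ p) μ := by
    refine (hg.norm.bdd_mul huc.norm.aestronglyMeasurable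
      (.of_forall fun x => (norm_norm _).trans_le (hM x))).congr (.of_forall fun x => ?_)
    beta_reduce
    rw [hg_norm, ← Real.rpow_one_add' (norm_nonneg _) (by linarith), add_sub_cancel]
  have hup_enorm : ∀ x, ‖‖u x‖ ^ p‖ₑ = ‖u x‖ₑ ^ p := fun x => by
    rw [Real.enorm_rpow_of_nonneg (norm_nonneg _) hpr.nonneg, enorm_norm]
  have hpair : ‖∫ x, inner 𝕜 (u x) (g x) ∂μ‖ₑ = ∫⁻ x, ‖u x‖ₑ ^ p ∂μ := by
    have hnonneg : ∀ x, ‖‖u x‖ ^ p‖ = ‖u x‖ ^ p := fun x => Real.norm_of_nonneg (by positivity)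
    simp_rw [g, inner_rpow_smul_self hp, integral_ofReal, ← hup_enorm]
    rw [← ofReal_integral_norm_eq_lintegral_enorm hup, ← ofReal_norm, RCLike.norm_ofReal,
      abs_of_nonneg (by positivity)]
    simp_rw [hnonneg]
  refine rpow_one_div_le_of_le_mul_rpow hpr ?_ ?_
  · simp_rw [← hup_enorm]
    exact hup.2.ne
  · simpa only [hpair, hg_rpow] using hdual g (hw.smul huc) hg

end Duality

/-! ### Convolutions and the square function -/

section Convolution

variable {f g h : ℝ → ℂ} {M : ℝ}

lemma conv_eq_convolution (f g : ℝ → ℂ) :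
    conv f g = convolution f g (ContinuousLinearMap.mul ℂ ℂ) :=
  rfl

lemma integrable_conv (hf : Integrable f) (hg : Integrable g) : Integrable (conv f g) :=
  hf.integrable_convolution (ContinuousLinearMap.mul ℂ ℂ) hg

lemma continuous_conv (hf : Integrable f) (hgc : Continuous g) (hM : ∀ x, ‖g x‖ ≤ M) :
    Continuous (conv f g) :=
  BddAbove.continuous_convolution_right_of_integrable (ContinuousLinearMap.mul ℂ ℂ)
    ⟨M, forall_mem_range.2 hM⟩ hf hgc

lemma norm_conv_le (hf : Integrable f) (hM : ∀ x, ‖g x‖ ≤ M) (x : ℝ) :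
    ‖conv f g x‖ ≤ (∫ t, ‖f t‖) * M := by
  rw [← integral_mul_const]
  refine norm_integral_le_of_norm_le (hf.norm.mul_const M) (.of_forall fun t => ?_)
  rw [norm_mul]
  exact mul_le_mul_of_nonneg_left (hM _) (norm_nonneg _)

lemma conv_comm (f g : ℝ → ℂ) : conv f g = conv g f := by
  rw [conv_eq_convolution, ← convolution_flip, ContinuousLinearMap.flip_mul, conv_eq_convolution]

lemma conv_assoc (hf : Integrable f) (hg : Integrable g) (hh : AEStronglyMeasurable h)
    (hM : ∀ x, ‖h x‖ ≤ M) : conv (conv f g) h = conv f (conv g h) := by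
  have hshift : ∀ x, AEStronglyMeasurable (fun t => h (x - t)) := fun x =>
    hh.comp_measurePreserving (Measure.measurePreserving_sub_left volume x)
  ext x
  set L := ContinuousLinearMap.mul ℂ ℂ
  refine convolution_assoc' L L L L (fun a b c => mul_assoc a b c) (hf.ae_convolution_exists L hg)
    (.of_forall fun y => ?_) ?_
  · exact hg.mul_bdd (hshift y) (.of_forall fun t => hM (y - t))
  · refine ((hf.convolution_integrand L hg).mul_bdd
      (hshift x).comp_fst (.of_forall fun p => hM (x - p.1))).congr (.of_forall fun p => ?_)
    exact mul_assoc _ _ _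

lemma conv_right_comm (hf : Integrable f) (hg : Integrable g) {N : ℝ} (hN : ∀ x, ‖g x‖ ≤ N)
    (hh : Integrable h) (hM : ∀ x, ‖h x‖ ≤ M) : conv (conv f g) h = conv (conv f h) g := by
  rw [conv_assoc hf hg hh.1 hM, conv_comm g h, ← conv_assoc hf hh hg.1 hN]

end Convolution

section RotatedConvolution

variable {φ f : ℝ → ℂ} {a b : ℝ}

lemma phim_eq_wavePacket (φ : ℝ → ℂ) (a b x : ℝ) : phim φ a b x = wavePacket φ a b 0 (-x) := by
  rw [phim, wavePacket, mul_neg, neg_neg, zero_sub, neg_neg]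

lemma integrable_phim (hφ : Integrable φ) (hab : a < b) : Integrable (phim φ a b) := by
  rw [funext (phim_eq_wavePacket φ a b)]
  exact (integrable_wavePacket hφ hab 0).comp_neg

lemma continuous_phim (hφ : Continuous φ) (a b : ℝ) : Continuous (phim φ a b) := by
  rw [funext (phim_eq_wavePacket φ a b)]
  exact (continuous_wavePacket hφ a b 0).comp continuous_neg

lemma exists_norm_phim_le (φ : SchwartzMap ℝ ℂ) (a b : ℝ) : ∃ M, ∀ x, ‖phim φ a b x‖ ≤ M := by
  obtain ⟨M, hM⟩ := exists_norm_wavePacket_le φ a b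
  exact ⟨M, fun x => (phim_eq_wavePacket φ a b x ▸ hM 0 (-x))⟩

lemma rotConv_eq_integral (φ : ℝ → ℂ) (a b : ℝ) (f : ℝ → ℂ) (x : ℝ) :
    rotConv φ a b f x = ∫ y, wavePacket φ a b x y * f y := by
  rw [rotConv, conv, ← integral_const_mul]
  refine integral_congr_ae (.of_forall fun y => ?_)
  beta_reduce
  rw [phim, wavePacket, show -(a * y) = -(a * x) + a * (x - y) by ring, e2pi_add]
  ring

lemma norm_rotConv (φ : ℝ → ℂ) (a b : ℝ) (f : ℝ → ℂ) (x : ℝ) :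
    ‖rotConv φ a b f x‖ = ‖conv f (phim φ a b) x‖ := by
  rw [rotConv, norm_mul, norm_e2pi, one_mul]

lemma integrable_rotConv (hφ : Integrable φ) (hab : a < b) (hf : Integrable f) :
    Integrable (rotConv φ a b f) :=
  (integrable_conv hf (integrable_phim hφ hab)).bdd_mul (c := 1) (by fun_prop)
    (.of_forall fun _ => (norm_e2pi _).le)

lemma continuous_rotConv (φ : SchwartzMap ℝ ℂ) (a b : ℝ) (hf : Integrable f) :
    Continuous (rotConv φ a b f) := by
  obtain ⟨M, hM⟩ := exists_norm_phim_le φ a b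
  exact Continuous.mul (by fun_prop) (continuous_conv hf (continuous_phim φ.continuous a b) hM)

lemma exists_norm_rotConv_le (φ : SchwartzMap ℝ ℂ) (a b : ℝ) (hf : Integrable f) :
    ∃ M, ∀ x, ‖rotConv φ a b f x‖ ≤ M := by
  obtain ⟨M, hM⟩ := exists_norm_phim_le φ a b
  exact ⟨_, fun x => (norm_rotConv φ a b f x).trans_le (norm_conv_le hf hM x)⟩

end RotatedConvolution

section SquareFunction

variable {ι : Type*} {f : ℝ → ℂ} {a b : ι → ℝ}

/-- The family of rotated pieces of `f`, as one vector-valued function whose norm is the square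
function of `f`. The components are conjugated so that pairing with it is complex linear in `f`. -/
noncomputable def conjRotConv (φ : ℝ → ℂ) (a b : ι → ℝ) (f : ℝ → ℂ) (x : ℝ) :
    EuclideanSpace ℂ ι :=
  WithLp.toLp 2 fun m => starRingEnd ℂ (rotConv φ (a m) (b m) f x)

lemma continuous_conjRotConv (φ : SchwartzMap ℝ ℂ) (a b : ι → ℝ) (hf : Integrable f) :
    Continuous (conjRotConv φ a b f) :=
  (PiLp.continuous_toLp 2 _).comp <| continuous_pi fun m =>
    Complex.continuous_conj.comp (continuous_rotConv φ (a m) (b m) hf)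

variable [Fintype ι]

lemma enorm_conjRotConv_sq (φ : ℝ → ℂ) (a b : ι → ℝ) (f : ℝ → ℂ) (x : ℝ) :
    ‖conjRotConv φ a b f x‖ₑ ^ 2 = ∑ m, ‖conv f (phim φ (a m) (b m)) x‖ₑ ^ 2 := by
  rw [← sum_enorm_sq_euclideanSpace]
  refine Finset.sum_congr rfl fun m _ => ?_
  rw [conjRotConv, ← ofReal_norm, RCLike.norm_conj, norm_rotConv, ofReal_norm]

lemma integrable_conjRotConv {φ : ℝ → ℂ} (hφ : Integrable φ) (hab : ∀ m, a m < b m)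
    (hf : Integrable f) : Integrable (conjRotConv φ a b f) :=
  .of_eval_piLp fun m => (LinearIsometryEquiv.integrable_comp_iff Complex.conjLIE).2
    (integrable_rotConv hφ (hab m) hf)

lemma exists_norm_conjRotConv_le (φ : SchwartzMap ℝ ℂ) (a b : ι → ℝ) (hf : Integrable f) :
    ∃ M, ∀ x, ‖conjRotConv φ a b f x‖ ≤ M := by
  choose M hM using fun m => exists_norm_rotConv_le φ (a m) (b m) hf
  refine ⟨√(∑ m, M m ^ 2), fun x => ?_⟩
  rw [EuclideanSpace.norm_eq]
  refine Real.sqrt_le_sqrt (Finset.sum_le_sum fun m _ => ?_)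
  exact pow_le_pow_left₀ (norm_nonneg _) ((RCLike.norm_conj _).trans_le (hM m x)) 2

lemma integral_inner_conjRotConv (φ : SchwartzMap ℝ ℂ) (hab : ∀ m, a m < b m)
    (hf : Integrable f) {M : ℝ} (hM : ∀ x, ‖f x‖ ≤ M) {g : ℝ → EuclideanSpace ℂ ι}
    (hg : Integrable g) :
    ∫ x, inner ℂ (conjRotConv φ a b f x) (g x)
      = ∫ y, f y * ∫ x, wavePacketKernel φ a b x y (g x) := by
  have hpair : ∀ x, inner ℂ (conjRotConv φ a b f x) (g x)
      = ∑ m, (∫ y, f y * wavePacket φ (a m) (b m) x y) * g x m := fun x => by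
    rw [PiLp.inner_apply]
    refine Finset.sum_congr rfl fun m _ => ?_
    simp_rw [RCLike.inner_apply, conjRotConv, RCLike.conj_conj, rotConv_eq_integral, mul_comm]
  have hleft : ∀ m, Integrable fun x => (∫ y, f y * wavePacket φ (a m) (b m) x y) * g x m := by
    intro m
    obtain ⟨N, hN⟩ := exists_norm_rotConv_le φ (a m) (b m) hf
    simp_rw [mul_comm (f _), ← rotConv_eq_integral]
    exact (hg.eval_piLp m).bdd_mul (continuous_rotConv φ _ _ hf).aestronglyMeasurable
      (.of_forall hN)
  have hright : ∀ m, Integrable fun y => f y * ∫ x, wavePacket φ (a m) (b m) x y * g x m :=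
    fun m => (integrable_prod_wavePacket_mul φ.integrable (hab m)
      (hg.eval_piLp m)).integral_prod_right.bdd_mul hf.1 (.of_forall hM)
  simp_rw [hpair, integral_wavePacketKernel_apply φ a b hg, Finset.mul_sum]
  rw [integral_finsetSum _ fun m _ => hleft m, integral_finsetSum _ fun m _ => hright m]
  exact Finset.sum_congr rfl fun m _ =>
    (integral_mul_integral_wavePacket_mul φ.integrable (hab m) (hg.eval_piLp m) hf.1 hM).symm

/-- The constant in the square function estimate `lintegral_enorm_rpow_conjRotConv_le`. -/
noncomputable def squareFunctionConst (φ : SchwartzMap ℝ ℂ) (p : ℝ) : ℝ≥0∞ :=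
  singularIntegralConst (hormanderConst φ + (∫⁻ t, ‖φ t‖ₑ) ^ 2) p.conjExponent
    ^ (1 / p.conjExponent)

lemma squareFunctionConst_ne_top (φ : SchwartzMap ℝ ℂ) {p : ℝ} (hp : 1 < p) :
    squareFunctionConst φ p ≠ ∞ := by
  have hφ : ∫⁻ t, ‖φ t‖ₑ ≠ ∞ := φ.integrable.2.ne
  have hA := hormanderConst_ne_top φ
  refine ENNReal.rpow_ne_top_of_nonneg ?_ (singularIntegralConst_ne_top (by finiteness) _)
  exact (Real.HolderConjugate.conjExponent hp).symm.one_div_nonneg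

theorem lintegral_enorm_rpow_conjRotConv_le {φ : SchwartzMap ℝ ℂ}
    (hφ : support (𝓕 ⇑φ) ⊆ Icc 0 1) {p : ℝ} (hp : 2 ≤ p) (hab : ∀ m, a m < b m)
    (hd : Pairwise (Disjoint on fun m => Icc (a m) (b m))) (hf : Integrable f) {M : ℝ}
    (hM : ∀ x, ‖f x‖ ≤ M) :
    (∫⁻ x, ‖conjRotConv φ a b f x‖ₑ ^ p) ^ (1 / p)
      ≤ squareFunctionConst φ p * (∫⁻ x, ‖f x‖ₑ ^ p) ^ (1 / p) := by
  set r := p.conjExponent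
  have hpr : p.HolderConjugate r := .conjExponent (by linarith)
  have hr : r ≤ 2 := (div_le_iff₀ (by linarith)).2 (by linarith)
  have hK := isSingularKernel_wavePacketKernel hφ hab hd
  obtain ⟨N, hN⟩ := exists_norm_conjRotConv_le φ a b hf
  refine lintegral_enorm_rpow_le_of_forall_integral_inner_le (𝕜 := ℂ) hp hpr
    (continuous_conjRotConv φ a b hf) (integrable_conjRotConv φ.integrable hab hf) hN
    fun g hgc hg => ?_
  set T : ℝ → ℂ := fun y => ∫ x, wavePacketKernel φ a b x y (g x)
  have hT : AEStronglyMeasurable T := hK.aestronglyMeasurable_integralOperator hg.1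
  calc ‖∫ x, inner ℂ (conjRotConv φ a b f x) (g x)‖ₑ = ‖∫ y, f y * T y‖ₑ := by
        rw [integral_inner_conjRotConv φ hab hf hM hg]
    _ ≤ ∫⁻ y, ‖f y‖ₑ * ‖T y‖ₑ := by
        simp_rw [← enorm_mul]
        exact enorm_integral_le_lintegral_enorm _
    _ ≤ (∫⁻ y, ‖f y‖ₑ ^ p) ^ (1 / p) * (∫⁻ y, ‖T y‖ₑ ^ r) ^ (1 / r) :=
        ENNReal.lintegral_mul_le_Lp_mul_Lq _ hpr hf.1.enorm hT.enorm
    _ ≤ (∫⁻ y, ‖f y‖ₑ ^ p) ^ (1 / p)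
          * (singularIntegralConst (hormanderConst φ + (∫⁻ t, ‖φ t‖ₑ) ^ 2) r
              * ∫⁻ x, ‖g x‖ₑ ^ r) ^ (1 / r) :=
        mul_le_mul_right (ENNReal.rpow_le_rpow
          (hK.lintegral_enorm_rpow_integralOperator_le hgc hg hpr.symm.lt hr)
          hpr.symm.one_div_nonneg) _
    _ = squareFunctionConst φ p * (∫⁻ x, ‖f x‖ₑ ^ p) ^ (1 / p)
          * (∫⁻ x, ‖g x‖ₑ ^ r) ^ (1 / r) := by
        rw [ENNReal.mul_rpow_of_nonneg _ _ hpr.symm.one_div_nonneg, squareFunctionConst]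
        ring

end SquareFunction

section Besov

lemma lqNorm_le_mul {q : ℝ≥0∞} (hq : 0 < q) {F G : ℤ → ℝ≥0∞} {C : ℝ≥0∞}
    (h : ∀ j, F j ≤ C * G j) : lqNorm q F ≤ C * lqNorm q G := by
  unfold lqNorm
  split_ifs with hq'
  · rw [ENNReal.mul_iSup]
    exact iSup_mono h
  have hq₀ : 0 < q.toReal := ENNReal.toReal_pos hq.ne' hq'
  calc (∑' j, F j ^ q.toReal) ^ (1 / q.toReal)
      ≤ (∑' j, (C * G j) ^ q.toReal) ^ (1 / q.toReal) := by
        gcongr with j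
        exact h j
    _ = C * (∑' j, G j ^ q.toReal) ^ (1 / q.toReal) := by
        simp_rw [ENNReal.mul_rpow_of_nonneg _ _ hq₀.le]
        rw [ENNReal.tsum_mul_left, ENNReal.mul_rpow_of_nonneg _ _ (by positivity),
          ← ENNReal.rpow_mul, mul_one_div_cancel hq₀.ne', ENNReal.rpow_one]

lemma integrable_psi {Φ : ℝ → ℂ} (hΦ : Integrable Φ) (j : ℤ) : Integrable (psi Φ j) :=
  ((hΦ.comp_mul_left' (by positivity)).const_mul _).sub
    ((hΦ.comp_mul_left' (by positivity)).const_mul _)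

lemma exists_norm_psi_le (Φ : SchwartzMap ℝ ℂ) (j : ℤ) : ∃ M, ∀ x, ‖psi Φ j x‖ ≤ M := by
  refine ⟨‖(((2 : ℝ) ^ j : ℝ) : ℂ)‖ * SchwartzMap.seminorm ℝ 0 0 Φ
    + ‖(((2 : ℝ) ^ (j - 1) : ℝ) : ℂ)‖ * SchwartzMap.seminorm ℝ 0 0 Φ, fun x => ?_⟩
  refine (norm_sub_le _ _).trans ?_
  rw [norm_mul, norm_mul]
  gcongr <;> exact SchwartzMap.norm_le_seminorm ℝ Φ _

lemma rpow_sum_enorm_conv_conv_phim_eq {ι : Type*} [Fintype ι] (φ : SchwartzMap ℝ ℂ)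
    {a b : ι → ℝ} (hab : ∀ m, a m < b m) {f g : ℝ → ℂ} (hf : Integrable f) (hg : Integrable g)
    {M : ℝ} (hM : ∀ x, ‖g x‖ ≤ M) (x : ℝ) :
    (∑ m, ‖conv (conv f (phim φ (a m) (b m))) g x‖ₑ ^ 2) ^ (1 / 2 : ℝ)
      = ‖conjRotConv φ a b (conv f g) x‖ₑ := by
  rw [← rpow_half_sq ‖_‖ₑ, enorm_conjRotConv_sq]
  congr! 4 with m
  obtain ⟨N, hN⟩ := exists_norm_phim_le φ (a m) (b m)
  rw [conv_right_comm hf (integrable_phim φ.integrable (hab m)) hN hg hM]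

theorem statement11_general.{u} {φ : SchwartzMap ℝ ℂ} (hφ : support (𝓕 ⇑φ) ⊆ Icc 0 1) {p : ℝ}
    (hp : 2 ≤ p) :
    ∃ C : ℝ, 0 < C ∧ ∀ {ι : Type u} [Fintype ι] {a b : ι → ℝ}, (∀ m, a m < b m) →
      Pairwise (Disjoint on fun m => Icc (a m) (b m)) →
      ∀ {q : ℝ≥0∞}, 0 < q → ∀ (w : ℤ → ℝ≥0∞) {f : ℝ → ℂ}, Integrable f →
      ∀ {ψ : ℤ → ℝ → ℂ}, (∀ j, Integrable (ψ j)) → (∀ j, ∃ M, ∀ x, ‖ψ j x‖ ≤ M) →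
        (lqNorm q fun j => w j * (∫⁻ x, ((∑ m,
            ‖conv (conv f (phim φ (a m) (b m))) (ψ j) x‖ₑ ^ 2) ^ (1 / 2 : ℝ)) ^ p) ^ (1 / p))
          ≤ ENNReal.ofReal C *
            lqNorm q fun j => w j * (∫⁻ x, ‖conv f (ψ j) x‖ₑ ^ p) ^ (1 / p) := by
  have hC : squareFunctionConst φ p ≤ ENNReal.ofReal ((squareFunctionConst φ p).toReal + 1) := by
    rw [← ENNReal.toReal_le_toReal (squareFunctionConst_ne_top φ (by linarith)) (by finiteness),
      ENNReal.toReal_ofReal (by positivity)]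
    linarith
  refine ⟨(squareFunctionConst φ p).toReal + 1, by positivity,
    fun {ι} _ {a b} hab hd {q} hq w {f} hf {ψ} hψ hψM => lqNorm_le_mul hq fun j => ?_⟩
  obtain ⟨M, hM⟩ := hψM j
  simp_rw [rpow_sum_enorm_conv_conv_phim_eq φ hab hf (hψ j) hM]
  rw [mul_left_comm]
  refine mul_le_mul_right ?_ (w j)
  exact (lintegral_enorm_rpow_conjRotConv_le hφ hp hab hd (integrable_conv hf (hψ j))
    (norm_conv_le hf hM)).trans (mul_le_mul_left hC _)

end Besov

/-- uniform boundedness of the family WITHOUT rotations on the homogeneous Besov space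
`Ḃ^s_{pq}`, for `2 ≤ p < ∞`, `0 < q ≤ ∞` and `s ≥ 0`. -/
theorem statement11 (φ Φ : SchwartzMap ℝ ℂ)
    (hφ : Function.support (𝓕 ⇑φ) ⊆ Set.Ioo 0 1)
    (hΦsupp : Function.support (𝓕 ⇑Φ) ⊆ Set.Icc (-2) 2)
    (hΦone : ∀ ξ ∈ Set.Icc (-1:ℝ) 1, 𝓕 ⇑Φ ξ = 1)
    (p : ℝ) (q : ℝ≥0∞) (s : ℝ) (hp : 2 ≤ p) (hq : 0 < q) (hs : 0 ≤ s) :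
    ∃ C : ℝ, 0 < C ∧ ∀ (N : ℕ) (a b : Fin N → ℝ), Admissible a b →
      ∀ f : SchwartzMap ℝ ℂ,
        (lqNorm q fun j : ℤ => (2 : ℝ≥0∞) ^ ((j : ℝ) * s) *
            (∫⁻ x : ℝ, ((∑ m : Fin N,
              (‖conv (conv ⇑f (phim ⇑φ (a m) (b m))) (psi ⇑Φ j) x‖₊ : ℝ≥0∞) ^ 2)
                ^ (1/2 : ℝ)) ^ p) ^ (1/p))
        ≤ ENNReal.ofReal C *
          lqNorm q (fun j : ℤ => (2 : ℝ≥0∞) ^ ((j : ℝ) * s) *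
            (∫⁻ x : ℝ, (‖conv ⇑f (psi ⇑Φ j) x‖₊ : ℝ≥0∞) ^ p) ^ (1/p)) := by
  obtain ⟨C, hC, h⟩ := statement11_general (hφ.trans Ioo_subset_Icc_self) hp
  exact ⟨C, hC, fun N a b ⟨hab, _, hd⟩ f => h hab (fun m m' => hd m m') hq _ f.integrable
    (integrable_psi Φ.integrable) (exists_norm_psi_le Φ)⟩
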